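/- arXiv:2512.06587 — 9 statements merged into one kernel-verified Lean document; each statement's English description precedes it below -/
import Mathlib

section
/- For every integer l ≥ 6, the function g_l(j) is strictly increasing in j for 0 ≤ j ≤ τ = ⌊l/3⌋, and its second-order finite differences are strictly positive: Δ²g_l(j) = g_l(j+1) − 2·g_l(j) + g_l(j−1) > 0 for every integer j with 1 ≤ j ≤ τ − 1. -/
/-- `g_l(j) = ((l+j)^(2j))² / ((l+3j)^(2j) · (l−j)^(2j))` as a rational number, where
`x^(m)` denotes the descending factorial `x(x−1)⋯(x−m+1)`. -/
def gFn (l j : ℕ) : ℚ :=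
  ((Nat.descFactorial (l + j) (2 * j) : ℚ)) ^ 2 /
    ((Nat.descFactorial (l + 3 * j) (2 * j) : ℚ) * (Nat.descFactorial (l - j) (2 * j) : ℚ))

lemma gFn_fact (l j m : ℕ) (h : l = m + 3 * j) : gFn l j =
    (((l + j).factorial : ℚ) / ((m + 2 * j).factorial : ℚ)) ^ 3 *
      ((m.factorial : ℚ) / ((l + 3 * j).factorial : ℚ)) := by
  subst h
  have h1 := Nat.factorial_mul_descFactorial (show 2 * j ≤ m + 3 * j + j by omega)
  have h2 := Nat.factorial_mul_descFactorial (show 2 * j ≤ m + 3 * j + 3 * j by omega)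
  have h3 := Nat.factorial_mul_descFactorial (show 2 * j ≤ m + 3 * j - j by omega)
  have e1 : m + 3 * j + j - 2 * j = m + 2 * j := by omega
  have e2 : m + 3 * j + 3 * j - 2 * j = m + 3 * j + j := by omega
  have e3 : m + 3 * j - j - 2 * j = m := by omega
  have e4 : m + 3 * j - j = m + 2 * j := by omega
  rw [e1] at h1
  rw [e2] at h2
  rw [e3] at h3
  unfold gFn
  rw [e4] at h3 ⊢
  have p1 : ((m + 2 * j).factorial : ℚ) ≠ 0 := by positivity
  have p2 : ((m + 3 * j + j).factorial : ℚ) ≠ 0 := by positivity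
  have p3 : (m.factorial : ℚ) ≠ 0 := by positivity
  have p4 : ((m + 3 * j + 3 * j).factorial : ℚ) ≠ 0 := by positivity
  have q1 : ((m + 3 * j + j).descFactorial (2 * j) : ℚ) =
    (m + 3 * j + j).factorial / (m + 2 * j).factorial := by
    rw [eq_div_iff p1, mul_comm]; exact_mod_cast h1
  have q2 : ((m + 3 * j + 3 * j).descFactorial (2 * j) : ℚ) =
    (m + 3 * j + 3 * j).factorial / (m + 3 * j + j).factorial := by
    rw [eq_div_iff p2, mul_comm]; exact_mod_cast h2
  have q3 : ((m + 2 * j).descFactorial (2 * j) : ℚ) =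
    (m + 2 * j).factorial / m.factorial := by
    rw [eq_div_iff p3, mul_comm]; exact_mod_cast h3
  rw [q1, q2, q3]
  field_simp

/-- one factor of the ratio -/
def fr (l j a : ℚ) : ℚ := (l * (l + 1) - j * (j + 1)) / (l * (l + 1) - a * (a - 1))

/-- the ratio of consecutive values -/
def rat (l j : ℚ) : ℚ := fr l j (3 * j + 1) * fr l j (3 * j + 2) * fr l j (3 * j + 3)

lemma gFn_pos (l j : ℕ) (h : 3 * j ≤ l) : 0 < gFn l j := by
  rw [gFn_fact l j (l - 3 * j) (by omega)]
  positivity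

lemma gFn_succ (l j : ℕ) (h : 3 * (j + 1) ≤ l) : gFn l (j + 1) = gFn l j * rat l j := by
  obtain ⟨m, rfl⟩ := Nat.exists_eq_add_of_le' h
  rw [gFn_fact _ (j + 1) m rfl, gFn_fact _ j (m + 3) (by ring)]
  have e1 : m + 3 * (j + 1) + (j + 1) = (m + 3 * (j + 1) + j) + 1 := by ring
  have e2 : m + 3 + 2 * j = (m + 2 * (j + 1)) + 1 := by ring
  have e3 : m + 3 * (j + 1) + 3 * (j + 1) = (m + 3 * (j + 1) + 3 * j) + 1 + 1 + 1 := by ring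
  have e4 : m + 3 = m + 1 + 1 + 1 := by ring
  rw [e1, e2, e3, e4]
  have p1 : ((m + 2 * (j + 1)).factorial : ℚ) ≠ 0 := by positivity
  have p2 : ((m + 3 * (j + 1) + j).factorial : ℚ) ≠ 0 := by positivity
  have p3 : (m.factorial : ℚ) ≠ 0 := by positivity
  have p4 : ((m + 3 * (j + 1) + 3 * j).factorial : ℚ) ≠ 0 := by positivity
  simp only [Nat.factorial_succ, Nat.cast_mul]
  generalize ((m + 2 * (j + 1)).factorial : ℚ) = A at *
  generalize ((m + 3 * (j + 1) + j).factorial : ℚ) = B at *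
  generalize (m.factorial : ℚ) = C at *
  generalize ((m + 3 * (j + 1) + 3 * j).factorial : ℚ) = D at *
  unfold rat fr
  simp only [Nat.cast_add, Nat.cast_mul, Nat.cast_one, Nat.cast_ofNat]
  generalize hM : (m : ℚ) = M
  generalize hJ : (j : ℚ) = J
  have hM0 : 0 ≤ M := by rw [← hM]; positivity
  have hJ0 : 0 ≤ J := by rw [← hJ]; positivity
  have n0 : (M + 3 * (J + 1)) * (M + 3 * (J + 1) + 1) - J * (J + 1) =
    (M + 3 * (J + 1) + J + 1) * (M + 2 * (J + 1) + 1) := by ring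
  have n1 : (M + 3 * (J + 1)) * (M + 3 * (J + 1) + 1) - (3 * J + 1) * (3 * J + 1 - 1) =
    (M + 3 * (J + 1) + 3 * J + 1) * (M + 1 + 1 + 1) := by ring
  have n2 : (M + 3 * (J + 1)) * (M + 3 * (J + 1) + 1) - (3 * J + 2) * (3 * J + 2 - 1) =
    (M + 3 * (J + 1) + 3 * J + 1 + 1) * (M + 1 + 1) := by ring
  have n3 : (M + 3 * (J + 1)) * (M + 3 * (J + 1) + 1) - (3 * J + 3) * (3 * J + 3 - 1) =
    (M + 3 * (J + 1) + 3 * J + 1 + 1 + 1) * (M + 1) := by ring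
  rw [n0, n1, n2, n3]
  have u1 : M + 2 + 1 = M + 1 + 1 + 1 := by ring
  have u2 : M + 3 * (J + 1) + 3 * J + 2 + 1 = M + 3 * (J + 1) + 3 * J + 1 + 1 + 1 := by ring
  rw [u1, u2]
  clear u1 u2
  have k1 : M + 3 * (J + 1) + J + 1 ≠ 0 := by positivity
  have k2 : M + 2 * (J + 1) + 1 ≠ 0 := by positivity
  have k3 : M + 3 * (J + 1) + 3 * J + 1 ≠ 0 := by positivity
  have k4 : M + 3 * (J + 1) + 3 * J + 1 + 1 ≠ 0 := by positivity
  have k5 : M + 3 * (J + 1) + 3 * J + 1 + 1 + 1 ≠ 0 := by positivity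
  have k6 : M + 1 ≠ 0 := by positivity
  have k7 : M + 1 + 1 ≠ 0 := by positivity
  have k8 : M + 1 + 1 + 1 ≠ 0 := by positivity
  generalize M + 3 * (J + 1) + J + 1 = K1 at *
  generalize M + 2 * (J + 1) + 1 = K2 at *
  generalize M + 3 * (J + 1) + 3 * J + 1 + 1 + 1 = K5 at *
  generalize M + 3 * (J + 1) + 3 * J + 1 + 1 = K4 at *
  generalize M + 3 * (J + 1) + 3 * J + 1 = K3 at *
  generalize M + 1 + 1 + 1 = K8 at *
  generalize M + 1 + 1 = K7 at *
  generalize M + 1 = K6 at *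
  field_simp

lemma den_pos (l j a : ℚ) (hj : 0 ≤ j) (h : 3 * (j + 1) ≤ l) (h1 : 1 ≤ a) (ha : a ≤ 3 * j + 3) :
    0 < l * (l + 1) - a * (a - 1) := by
  have : l * (l + 1) - a * (a - 1) = (l + a) * (l + 1 - a) := by ring
  rw [this]
  apply mul_pos <;> linarith

lemma rat_gt (l j : ℚ) (hj : 0 ≤ j) (h : 3 * (j + 1) ≤ l) : 1 < rat l j := by
  unfold rat
  have a1 : 1 ≤ fr l j (3 * j + 1) := by
    unfold fr
    rw [one_le_div (den_pos l j _ hj h (by linarith) (by linarith))]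
    nlinarith
  have a2 : 1 < fr l j (3 * j + 2) := by
    unfold fr
    rw [one_lt_div (den_pos l j _ hj h (by linarith) (by linarith))]
    nlinarith
  have a3 : 1 < fr l j (3 * j + 3) := by
    unfold fr
    rw [one_lt_div (den_pos l j _ hj h (by linarith) (by linarith))]
    nlinarith
  exact one_lt_mul_of_le_of_lt (one_le_mul_of_one_le_of_one_le a1 a2.le) a3

lemma fr_mono (l j c : ℚ) (hj : 0 ≤ j) (h : 3 * (j + 1 + 1) ≤ l) (hc : c = 1 ∨ c = 2 ∨ c = 3) :
    fr l j (3 * j + c) ≤ fr l (j + 1) (3 * (j + 1) + c) := by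
  have c1 : 1 ≤ c := by rcases hc with rfl | rfl | rfl <;> norm_num
  have c2 : c ≤ 3 := by rcases hc with rfl | rfl | rfl <;> norm_num
  unfold fr
  rw [div_le_div_iff₀ (den_pos l j _ hj (by linarith) (by linarith) (by linarith))
    (den_pos l (j + 1) _ (by linarith) (by linarith) (by linarith) (by linarith))]
  have hL : (j + 1) * (j + 1) ≤ l * (l + 1) := by nlinarith
  generalize l * (l + 1) = L at *
  rcases hc with rfl | rfl | rfl <;>
  nlinarith [mul_nonneg hj (sub_nonneg.2 hL), mul_nonneg hj hj, mul_nonneg hj (mul_nonneg hj hj)]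

lemma fr_nonneg (l j a : ℚ) (hj : 0 ≤ j) (h : 3 * (j + 1) ≤ l) (h1 : 1 ≤ a) (ha : a ≤ 3 * j + 3) :
    0 ≤ fr l j a := by
  unfold fr
  apply div_nonneg _ (den_pos l j a hj h h1 ha).le
  nlinarith

lemma rat_mono (l j : ℚ) (hj : 0 ≤ j) (h : 3 * (j + 1 + 1) ≤ l) : rat l j ≤ rat l (j + 1) := by
  have m1 := fr_mono l j 1 hj h (by simp)
  have m2 := fr_mono l j 2 hj h (by simp)
  have m3 := fr_mono l j 3 hj h (by simp)
  have z1 := fr_nonneg l j (3 * j + 1) hj (by linarith) (by linarith) (by linarith)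
  have z2 := fr_nonneg l j (3 * j + 2) hj (by linarith) (by linarith) (by linarith)
  have z3 := fr_nonneg l j (3 * j + 3) hj (by linarith) (by linarith) (by linarith)
  unfold rat
  have := z1.trans m1
  have := z2.trans m2
  gcongr

lemma gFn_lt (l j : ℕ) (h : 3 * (j + 1) ≤ l) : gFn l j < gFn l (j + 1) := by
  rw [gFn_succ l j h]
  have := gFn_pos l j (by omega)
  have := rat_gt l j (by positivity) (by exact_mod_cast h)
  nlinarith

/-- For every integer `l ≥ 6`, with `τ = ⌊l/3⌋`, `g_l(j)` is strictly increasing in `j` for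
`0 ≤ j ≤ τ`, and its second-order finite differences
`Δ²g_l(j) = g_l(j+1) − 2 g_l(j) + g_l(j−1)` are strictly positive for `1 ≤ j ≤ τ − 1`. -/
theorem stmt3 (l : ℕ) (hl : 6 ≤ l) :
    (∀ j k : ℕ, j < k → k ≤ l / 3 → gFn l j < gFn l k) ∧
    (∀ j : ℕ, 1 ≤ j → j ≤ l / 3 - 1 →
      0 < gFn l (j + 1) - 2 * gFn l j + gFn l (j - 1)) := by
  refine ⟨?_, ?_⟩
  · intro j k hjk
    induction k, hjk using Nat.le_induction with
    | base => intro hk; exact gFn_lt l j (by omega)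
    | succ k hk ih => intro hk2; exact (ih (by omega)).trans (gFn_lt l k (by omega))
  · intro j hj hj2
    obtain ⟨i, rfl⟩ := Nat.exists_eq_add_of_le' hj
    have hi : 3 * (i + 1 + 1) ≤ l := by omega
    have hlt := gFn_lt l i (by omega)
    have e1 := gFn_succ l i (by omega)
    have e2 := gFn_succ l (i + 1) hi
    have r1 := rat_gt l i (by positivity) (by exact_mod_cast (show 3 * (i + 1) ≤ l by omega))
    have r2 := rat_mono l i (by positivity) (by exact_mod_cast hi)
    have hp := gFn_pos l (i + 1) (by omega)
    rw [Nat.add_sub_cancel, e2]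
    push_cast
    nlinarith [mul_nonneg hp.le (sub_nonneg.2 r2), mul_pos (sub_pos.2 hlt) (sub_pos.2 r1)]
end

section
/- For every integer l ≥ 6, the second-order finite differences of g_l(j) are strictly increasing: Δ³g_l(j) = Δ²g_l(j+1) − Δ²g_l(j) > 0 for every integer j with 1 ≤ j ≤ τ − 2, where τ = ⌊l/3⌋. -/
/-- The second-order finite difference `Δ²g_l(j) = g_l(j+1) − 2 g_l(j) + g_l(j−1)`. -/
def d2g (l j : ℕ) : ℚ := gFn l (j + 1) - 2 * gFn l j + gFn l (j - 1)

theorem gFn_closed (j m : ℕ) :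
    gFn (3 * j + m) j = ((4 * j + m).factorial : ℚ) ^ 3 * (m.factorial : ℚ) /
      (((2 * j + m).factorial : ℚ) ^ 3 * ((6 * j + m).factorial : ℚ)) := by
  have h1 : ((2 * j + m).factorial : ℚ) * ((4 * j + m).descFactorial (2 * j) : ℚ)
      = ((4 * j + m).factorial : ℚ) := by
    have := Nat.factorial_mul_descFactorial (n := 4 * j + m) (k := 2 * j) (by omega)
    rw [show 4 * j + m - 2 * j = 2 * j + m by omega] at this
    exact_mod_cast this
  have h2 : ((4 * j + m).factorial : ℚ) * ((6 * j + m).descFactorial (2 * j) : ℚ)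
      = ((6 * j + m).factorial : ℚ) := by
    have := Nat.factorial_mul_descFactorial (n := 6 * j + m) (k := 2 * j) (by omega)
    rw [show 6 * j + m - 2 * j = 4 * j + m by omega] at this
    exact_mod_cast this
  have h3 : (m.factorial : ℚ) * ((2 * j + m).descFactorial (2 * j) : ℚ)
      = ((2 * j + m).factorial : ℚ) := by
    have := Nat.factorial_mul_descFactorial (n := 2 * j + m) (k := 2 * j) (by omega)
    rw [show 2 * j + m - 2 * j = m by omega] at this
    exact_mod_cast this
  unfold gFn
  rw [show 3 * j + m + j = 4 * j + m by ring, show 3 * j + m + 3 * j = 6 * j + m by ring,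
    show 3 * j + m - j = 2 * j + m by omega]
  have p1 : ((2 * j + m).factorial : ℚ) ≠ 0 := by positivity
  have p2 : ((4 * j + m).factorial : ℚ) ≠ 0 := by positivity
  have p3 : (m.factorial : ℚ) ≠ 0 := by positivity
  have p4 : ((6 * j + m).factorial : ℚ) ≠ 0 := by positivity
  rw [mul_comm, ← eq_div_iff p1] at h1
  rw [mul_comm, ← eq_div_iff p2] at h2
  rw [mul_comm, ← eq_div_iff p3] at h3
  rw [h1, h2, h3]
  field_simp

theorem gFn_pos' (j m : ℕ) : 0 < gFn (3 * j + m) j := by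
  rw [gFn_closed]; positivity

def NN (L j : ℚ) : ℚ := (L - j * (j + 1)) ^ 3
def DD (L j : ℚ) : ℚ :=
  (L - 3 * j * (3 * j + 1)) * (L - (3 * j + 1) * (3 * j + 2)) * (L - (3 * j + 2) * (3 * j + 3))

theorem gFn_ratio (l j : ℕ) (h : 3 * (j + 1) ≤ l) :
    0 < DD ((l : ℚ) * (l + 1)) j ∧ 
    gFn l (j + 1) = gFn l j * NN ((l : ℚ) * (l + 1)) j / DD ((l : ℚ) * (l + 1)) j := by
  obtain ⟨m, rfl⟩ := Nat.exists_eq_add_of_le h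
  have hD : DD (((3 * (j + 1) + m : ℕ) : ℚ) * ((3 * (j + 1) + m : ℕ) + 1)) j =
      ((m : ℚ) + 3) * (m + 2) * (m + 1) * ((6 * j + m + 4) * (6 * j + m + 5) * (6 * j + m + 6)) := by
    unfold DD; push_cast; ring
  have hN : NN (((3 * (j + 1) + m : ℕ) : ℚ) * ((3 * (j + 1) + m : ℕ) + 1)) j =
      ((4 * j + m + 4 : ℚ) * (2 * j + m + 3)) ^ 3 := by
    unfold NN; push_cast; ring
  rw [hD, hN]
  refine ⟨by positivity, ?_⟩
  rw [gFn_closed (j + 1) m, show 3 * (j + 1) + m = 3 * j + (m + 3) by ring, gFn_closed j (m + 3)]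
  rw [show 4 * (j + 1) + m = 4 * j + m + 3 + 1 by ring, show 2 * (j + 1) + m = 2 * j + m + 2 by ring,
    show 6 * (j + 1) + m = 6 * j + m + 3 + 1 + 1 + 1 by ring,
    show 4 * j + (m + 3) = 4 * j + m + 3 by ring, show 2 * j + (m + 3) = 2 * j + m + 2 + 1 by ring,
    show 6 * j + (m + 3) = 6 * j + m + 3 by ring, show m + 3 = m + 1 + 1 + 1 by ring]
  rw [Nat.factorial_succ (4 * j + m + 3), Nat.factorial_succ (2 * j + m + 2),
    Nat.factorial_succ (6 * j + m + 3 + 1 + 1), Nat.factorial_succ (6 * j + m + 3 + 1),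
    Nat.factorial_succ (6 * j + m + 3), Nat.factorial_succ (m + 1 + 1), Nat.factorial_succ (m + 1),
    Nat.factorial_succ m]
  have p1 : ((2 * j + m + 2).factorial : ℚ) ≠ 0 := by positivity
  have p2 : ((4 * j + m + 3).factorial : ℚ) ≠ 0 := by positivity
  have p3 : (m.factorial : ℚ) ≠ 0 := by positivity
  have p4 : ((6 * j + m + 3).factorial : ℚ) ≠ 0 := by positivity
  generalize (2 * j + m + 2).factorial = a at *
  generalize (4 * j + m + 3).factorial = b at *
  generalize m.factorial = c at *
  generalize (6 * j + m + 3).factorial = d at *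
  push_cast
  rw [div_mul_eq_mul_div, div_div, div_eq_div_iff (by positivity) (by positivity)]
  ring

theorem key_pos (i t : ℚ) (hi : 0 ≤ i) (ht : 0 ≤ t) (L : ℚ)
    (hL : L = (3 * i + 9) * (3 * i + 10) + t) :
    0 < NN L i * NN L (i + 1) * NN L (i + 2) - 3 * (NN L i * NN L (i + 1) * DD L (i + 2))
      + 3 * (NN L i * DD L (i + 1) * DD L (i + 2)) - DD L i * DD L (i + 1) * DD L (i + 2) := by
  subst hL
  unfold NN DD
  ring_nf
  positivity

/-- For every integer `l ≥ 6`, the second-order finite differences of `g_l` are strictly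
increasing: `Δ³g_l(j) = Δ²g_l(j+1) − Δ²g_l(j) > 0` for every `1 ≤ j ≤ ⌊l/3⌋ − 2`. -/
theorem stmt4 (l : ℕ) (hl : 6 ≤ l) (j : ℕ) (hj1 : 1 ≤ j) (hj2 : j ≤ l / 3 - 2) :
    0 < d2g l (j + 1) - d2g l j := by
  obtain ⟨i, rfl⟩ := Nat.exists_eq_add_of_le' hj1
  have hl3 : 3 * i + 9 ≤ l := by omega
  obtain ⟨d0, e0⟩ := gFn_ratio l i (by omega)
  obtain ⟨d1, e1⟩ := gFn_ratio l (i + 1) (by omega)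
  obtain ⟨d2, e2⟩ := gFn_ratio l (i + 1 + 1) (by omega)
  have hg : 0 < gFn l i := by
    obtain ⟨m, rfl⟩ := Nat.exists_eq_add_of_le (show 3 * i ≤ l by omega)
    exact gFn_pos' i m
  have hq : (3 * i + 9 : ℚ) ≤ l := by exact_mod_cast hl3
  have hi : (0 : ℚ) ≤ i := by positivity
  have key := key_pos i ((l : ℚ) * (l + 1) - (3 * i + 9) * (3 * i + 10)) hi
    (by nlinarith) ((l : ℚ) * (l + 1)) (by ring)
  unfold d2g
  simp only [Nat.add_sub_cancel]
  rw [e2, e1, e0]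
  push_cast at *
  rw [show (i : ℚ) + 1 + 1 = i + 2 by ring] at *
  generalize (l : ℚ) * (l + 1) = L at *
  generalize gFn l i = g at *
  have := div_pos (mul_pos hg key) (mul_pos (mul_pos d0 d1) d2)
  refine lt_of_lt_of_eq this ?_
  have n0 := d0.ne'
  have n1 := d1.ne'
  have n2 := d2.ne'
  generalize DD L i = x at *
  generalize DD L (i + 1) = y at *
  generalize DD L (i + 2) = z at *
  field_simp
  ring
end

section
/- For every integer l ≥ 6, with τ = ⌊l/3⌋, the smallest second-order finite difference of g_l exceeds the largest second-order finite difference of h_l: Δ²g_l(1) > Δ²h_l(τ−1), where Δ²g_l(1) = g_l(2) − 2·g_l(1) + g_l(0) and Δ²h_l(τ−1) = h_l(τ) − 2·h_l(τ−1) + h_l(τ−2). -/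
/-- `h_l(j) = (l+j)/(l-j)` as a rational number. -/
def hFn (l j : ℕ) : ℚ := ((l : ℚ) + j) / ((l : ℚ) - j)

lemma hbound (x t : ℚ) (hx : 6 ≤ x) (ht : 3 * t ≤ x) :
    (x + t) / (x - t) - 2 * ((x + (t - 1)) / (x - (t - 1))) + (x + (t - 2)) / (x - (t - 2))
      ≤ 27 / ((2 * x + 3) * (x + 3)) := by
  have ha : 2 * x / 3 ≤ x - t := by linarith
  have h1 : 0 < x - t := by linarith
  have h2 : 0 < x - (t - 1) := by linarith
  have h3 : 0 < x - (t - 2) := by linarith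
  have e : (x + t) / (x - t) - 2 * ((x + (t - 1)) / (x - (t - 1))) + (x + (t - 2)) / (x - (t - 2))
      = 4 * x / ((x - t) * (x - (t - 1)) * (x - (t - 2))) := by
    field_simp
    ring
  have e2 : 27 / ((2 * x + 3) * (x + 3))
      = 4 * x / ((2 * x / 3) * (2 * x / 3 + 1) * (2 * x / 3 + 2)) := by
    have : 0 < x := by linarith
    field_simp
    ring
  rw [e, e2]
  have hx0 : 0 < x := by linarith
  have k2 : 2 * x / 3 + 1 ≤ x - (t - 1) := by linarith
  have k3 : 2 * x / 3 + 2 ≤ x - (t - 2) := by linarith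
  gcongr

lemma gbound (y : ℚ) (hy : 0 ≤ y) :
    27 / ((2 * (y + 6) + 3) * ((y + 6) + 3)) <
     ((y+8)*(y+7)*(y+6)*(y+5))^2 / (((y+12)*(y+11)*(y+10)*(y+9)) * ((y+4)*(y+3)*(y+2)*(y+1)))
      - 2 * (((y+7)*(y+6))^2 / (((y+9)*(y+8)) * ((y+5)*(y+4)))) + 1 := by
  rw [← sub_pos]
  have e : ((y+8)*(y+7)*(y+6)*(y+5))^2 / (((y+12)*(y+11)*(y+10)*(y+9)) * ((y+4)*(y+3)*(y+2)*(y+1)))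
      - 2 * (((y+7)*(y+6))^2 / (((y+9)*(y+8)) * ((y+5)*(y+4)))) + 1
      - 27 / ((2 * (y + 6) + 3) * ((y + 6) + 3)) =
      (((y+8)*(y+7)*(y+6)*(y+5))^2 * ((y+8)*(y+5)) * (2*y+15)
      - 2 * ((y+7)*(y+6))^2 * ((y+12)*(y+11)*(y+10)*(y+3)*(y+2)*(y+1)) * (2*y+15)
      + ((y+12)*(y+11)*(y+10)*(y+4)*(y+3)*(y+2)*(y+1)) * ((y+8)*(y+5)) * ((2*y+15) * (y+9))
      - 27 * ((y+12)*(y+11)*(y+10)*(y+4)*(y+3)*(y+2)*(y+1)) * ((y+8)*(y+5))) /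
      (((y+12)*(y+11)*(y+10)*(y+9)) * ((y+4)*(y+3)*(y+2)*(y+1)) * ((y+8)*(y+5)) * (2*y+15)) := by
    have : 2 * (y + 6) + 3 = 2 * y + 15 := by ring
    rw [this, show y + 6 + 3 = y + 9 by ring]
    field_simp
  rw [e]
  apply div_pos
  · ring_nf
    positivity
  · positivity

theorem stmt5 (l : ℕ) (hl : 6 ≤ l) :
    hFn l (l / 3) - 2 * hFn l (l / 3 - 1) + hFn l (l / 3 - 2)
      < gFn l 2 - 2 * gFn l 1 + gFn l 0 := by
  have ht2 : 2 ≤ l / 3 := by omega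
  have ht : 3 * (l / 3) ≤ l := by omega
  generalize l / 3 = t at ht2 ht
  have H := hbound (l : ℚ) t (by exact_mod_cast hl) (by exact_mod_cast ht)
  obtain ⟨n, rfl⟩ := Nat.exists_eq_add_of_le' hl
  have G := gbound (n : ℚ) (by positivity)
  have eh : hFn (n+6) t - 2 * hFn (n+6) (t - 1) + hFn (n+6) (t - 2) ≤
      27 / ((2 * ((n : ℚ) + 6) + 3) * (((n : ℚ) + 6) + 3)) := by
    unfold hFn
    rw [Nat.cast_sub (by omega : 1 ≤ t), Nat.cast_sub ht2]
    push_cast at H ⊢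
    exact H
  have g0 : gFn (n+6) 0 = 1 := by simp [gFn]
  have g1 : gFn (n+6) 1 = ((n+7)*(n+6))^2 / (((n+9)*(n+8)) * ((n+5)*(n+4))) := by
    simp [gFn, Nat.descFactorial_succ]
    ring_nf
  have g2 : gFn (n+6) 2 = ((n+8)*(n+7)*(n+6)*(n+5))^2 / (((n+12)*(n+11)*(n+10)*(n+9)) * ((n+4)*(n+3)*(n+2)*(n+1))) := by
    simp [gFn, Nat.descFactorial_succ]
    ring_nf
  rw [g0, g1, g2]
  refine lt_of_le_of_lt eh ?_

  exact G
end

section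
/- For any real constants a and b with 0 ≤ a < 1 and b > 0, the function f_{a,b}(x) = 1/((a + b/x)² − 1) is strictly convex on the open interval (0, b/(1−a)); moreover it is positive and strictly increasing there, with derivative f′_{a,b}(x) = 2b(a x^{−2} + b x^{−3}) f_{a,b}(x)² > 0 and second derivative f″_{a,b}(x) > 0 on that interval. -/
/-- For real constants `0 ≤ a < 1` and `b > 0`, the function
`f_{a,b}(x) = 1/((a + b/x)² − 1)` is strictly convex on `(0, b/(1−a))`; moreover it is
positive and strictly increasing there, its derivative equals
`2b(a x⁻² + b x⁻³) f_{a,b}(x)² > 0` and its second derivative is strictly positive there. -/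
theorem stmt9 (a b : ℝ) (ha0 : 0 ≤ a) (ha1 : a < 1) (hb : 0 < b) :
    StrictConvexOn ℝ (Set.Ioo 0 (b / (1 - a))) (fun x : ℝ => 1 / ((a + b / x) ^ 2 - 1)) ∧
    (∀ x ∈ Set.Ioo 0 (b / (1 - a)), 0 < 1 / ((a + b / x) ^ 2 - 1)) ∧
    StrictMonoOn (fun x : ℝ => 1 / ((a + b / x) ^ 2 - 1)) (Set.Ioo 0 (b / (1 - a))) ∧
    (∀ x ∈ Set.Ioo 0 (b / (1 - a)),
      deriv (fun x : ℝ => 1 / ((a + b / x) ^ 2 - 1)) x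
          = 2 * b * (a / x ^ 2 + b / x ^ 3) * (1 / ((a + b / x) ^ 2 - 1)) ^ 2 ∧
      0 < deriv (fun x : ℝ => 1 / ((a + b / x) ^ 2 - 1)) x) ∧
    (∀ x ∈ Set.Ioo 0 (b / (1 - a)),
      0 < deriv (deriv (fun x : ℝ => 1 / ((a + b / x) ^ 2 - 1))) x) := by
  have hu : ∀ x ∈ Set.Ioo 0 (b / (1 - a)), 0 < x ∧ x < a * x + b := by
    intro x hx
    refine ⟨hx.1, ?_⟩
    have h := (lt_div_iff₀ (by linarith : 0 < 1 - a)).1 hx.2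
    linarith
  have hD : ∀ x ∈ Set.Ioo 0 (b / (1 - a)), 0 < (a * x + b) ^ 2 - x ^ 2 := by
    intro x hx
    obtain ⟨h1, h2⟩ := hu x hx
    nlinarith
  have hE : ∀ x : ℝ, 0 < x → (a + b / x) ^ 2 - 1 = ((a * x + b) ^ 2 - x ^ 2) / x ^ 2 := by
    intro x hx
    field_simp
  have hpos : ∀ x ∈ Set.Ioo 0 (b / (1 - a)), 0 < 1 / ((a + b / x) ^ 2 - 1) := by
    intro x hx
    have h0 := hx.1
    have h1 := hD x hx
    rw [hE x h0]
    positivity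
  have hev : ∀ x ∈ Set.Ioo 0 (b / (1 - a)), Set.Ioo 0 (b / (1 - a)) ∈ nhds x :=
    fun x hx => isOpen_Ioo.mem_nhds hx
  have hder : ∀ x ∈ Set.Ioo 0 (b / (1 - a)),
      HasDerivAt (fun x : ℝ => 1 / ((a + b / x) ^ 2 - 1))
        (2 * b * (x * (a * x + b)) / ((a * x + b) ^ 2 - x ^ 2) ^ 2) x := by
    intro x hx
    have h1 := hD x hx
    have hl : HasDerivAt (fun y : ℝ => a * y + b) a x := by
      simpa using ((hasDerivAt_id x).const_mul a).add_const b
    have hd := (hl.pow 2).sub (hasDerivAt_pow 2 x)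
    have hq := (hasDerivAt_pow 2 x).div hd h1.ne'
    have hq' := hq.congr_of_eventuallyEq (f₁ := fun x : ℝ => 1 / ((a + b / x) ^ 2 - 1)) (by
      filter_upwards [hev x hx] with y hy
      simp [hE y hy.1])
    refine hq'.congr_deriv ?_
    simp only [Pi.sub_apply, Pi.pow_apply]
    congr 1
    push_cast
    ring
  have hder2 : ∀ x ∈ Set.Ioo 0 (b / (1 - a)),
      0 < deriv (deriv (fun x : ℝ => 1 / ((a + b / x) ^ 2 - 1))) x := by
    intro x hx
    have h1 := hD x hx
    obtain ⟨h0, h2⟩ := hu x hx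
    have hl : HasDerivAt (fun y : ℝ => a * y + b) a x := by
      simpa using ((hasDerivAt_id x).const_mul a).add_const b
    have hd := ((hl.pow 2).sub (hasDerivAt_pow 2 x)).pow 2
    have hn := ((hasDerivAt_id x).mul hl).const_mul (2 * b)
    have hq := hn.div hd (by simpa using (pow_pos h1 2).ne')
    have hq' := hq.congr_of_eventuallyEq
      (f₁ := deriv (fun x : ℝ => 1 / ((a + b / x) ^ 2 - 1))) (by
      filter_upwards [hev x hx] with y hy
      rw [(hder y hy).deriv]
      simp)
    rw [hq'.deriv]
    simp only [Pi.sub_apply, Pi.pow_apply, Pi.mul_apply, id]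
    apply div_pos _ (by positivity)
    have key : 0 < (a * x + b) ^ 3 + 3 * x ^ 2 * (a * x + b) - 3 * a * x * (a * x + b) ^ 2
        - a * x ^ 3 := by
      generalize a * x + b = u at *
      have k1 : 0 < (u - x) ^ 3 := pow_pos (by linarith) 3
      have k2 : 0 < (1 - a) * (3 * x * u ^ 2 + x ^ 3) :=
        mul_pos (by linarith) (by positivity)
      nlinarith
    have := mul_pos (mul_pos (mul_pos two_pos hb) h1) key
    refine lt_of_lt_of_eq this ?_
    push_cast
    ring
  have hdp : ∀ x ∈ Set.Ioo 0 (b / (1 - a)),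
      0 < deriv (fun x : ℝ => 1 / ((a + b / x) ^ 2 - 1)) x := by
    intro x hx
    have h1 := hD x hx
    have h0 := hx.1
    rw [(hder x hx).deriv]
    positivity
  have hc : ContinuousOn (fun x : ℝ => 1 / ((a + b / x) ^ 2 - 1)) (Set.Ioo 0 (b / (1 - a))) :=
    fun x hx => (hder x hx).continuousAt.continuousWithinAt
  refine ⟨?_, hpos, ?_, ?_, hder2⟩
  · apply strictConvexOn_of_deriv2_pos (convex_Ioo _ _) hc
    rw [interior_Ioo]
    exact hder2
  · apply strictMonoOn_of_deriv_pos (convex_Ioo _ _) hc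
    rw [interior_Ioo]
    exact hdp
  · intro x hx
    refine ⟨?_, hdp x hx⟩
    have h1 := (hD x hx).ne'
    have h0 := hx.1
    rw [(hder x hx).deriv, hE x h0]
    field_simp
end

section
/- Along positive integers a → ∞, with l = 4a² − 1, the following asymptotic expansions hold: log g_{4a²−1}(a) = 1/(2a) + 7/(32a³) + O(a^{−5}) and log h_{4a²−1}(a) = 1/(2a) + 13/(96a³) + O(a^{−5}). In particular, for all sufficiently large a, g_{4a²−1}(a) > h_{4a²−1}(a). -/
open Filter Asymptotics

lemma aux_cast (n k : ℕ) (h : k ≤ n + 1) :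
    ((Nat.descFactorial n k : ℕ) : ℝ) = ∏ i ∈ Finset.range k, ((n : ℝ) - i) := by
  rw [Nat.descFactorial_eq_prod_range]
  push_cast
  refine Finset.prod_congr rfl fun i hi => ?_
  rw [Finset.mem_range] at hi
  rw [Nat.cast_sub (by omega)]

lemma aux_g (a : ℕ) (ha : 1 ≤ a) :
    ((gFn (4 * a ^ 2 - 1) a : ℚ) : ℝ) = ∏ i ∈ Finset.range (2 * a),
      (1 - 4 * (a : ℝ) ^ 2 / (4 * (a : ℝ) ^ 2 + (a - 1 - i)) ^ 2)⁻¹ := by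
  have h4 : a ≤ a ^ 2 := by nlinarith
  have hR : (a : ℝ) ≤ (a : ℝ) ^ 2 := by exact_mod_cast h4
  have hc : ((4 * a ^ 2 - 1 : ℕ) : ℝ) = 4 * (a : ℝ) ^ 2 - 1 := by
    rw [Nat.cast_sub (by omega)]; push_cast; ring
  have hc2 : ((4 * a ^ 2 - 1 - a : ℕ) : ℝ) = 4 * (a : ℝ) ^ 2 - 1 - a := by
    rw [Nat.cast_sub (by omega), hc]
  unfold gFn
  push_cast
  rw [aux_cast _ _ (by omega), aux_cast _ _ (by omega), aux_cast _ _ (by omega),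
    ← Finset.prod_pow, ← Finset.prod_mul_distrib, ← Finset.prod_div_distrib]
  refine Finset.prod_congr rfl fun i hi => ?_
  rw [Finset.mem_range] at hi
  have hi' : (i : ℝ) + 1 ≤ 2 * a := by exact_mod_cast hi
  have ha' : (1 : ℝ) ≤ a := by exact_mod_cast ha
  have hi0 : (0 : ℝ) ≤ i := Nat.cast_nonneg i
  push_cast
  rw [hc, hc2]
  have p1 : 0 < 4 * (a : ℝ) ^ 2 + (a - 1 - i) := by nlinarith
  have p2 : 0 < 4 * (a : ℝ) ^ 2 - 1 - a - i := by nlinarith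
  have p3 : 0 < 4 * (a : ℝ) ^ 2 - 1 + 3 * a - i := by nlinarith
  have e : 1 - 4 * (a : ℝ) ^ 2 / (4 * (a : ℝ) ^ 2 + (a - 1 - i)) ^ 2
      = ((4 * (a : ℝ) ^ 2 - 1 + 3 * a - i) * (4 * (a : ℝ) ^ 2 - 1 - a - i))
        / (4 * (a : ℝ) ^ 2 + (a - 1 - i)) ^ 2 := by
    field_simp
    ring
  rw [e, inv_div]
  congr 1
  ring

lemma aux_u (a s : ℝ) (ha : 1 ≤ a) (h1 : -a ≤ s) :
    0 ≤ 4 * a ^ 2 / (4 * a ^ 2 + s) ^ 2 ∧ 4 * a ^ 2 / (4 * a ^ 2 + s) ^ 2 ≤ 4 / 9 / a ^ 2 := by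
  have p : 3 * a ^ 2 ≤ 4 * a ^ 2 + s := by nlinarith
  have p0 : 0 < 3 * a ^ 2 := by positivity
  have p1 : 0 < 4 * a ^ 2 + s := by linarith
  refine ⟨by positivity, ?_⟩
  have : 4 / 9 / a ^ 2 = 4 * a ^ 2 / (3 * a ^ 2) ^ 2 := by field_simp; norm_num
  rw [this]
  gcongr

lemma aux_log2 (a u : ℝ) (ha : 1 ≤ a) (h0 : 0 ≤ u) (h1 : u ≤ 4 / 9 / a ^ 2) :
    |Real.log (1 - u) + (u + u ^ 2 / 2)| ≤ 1 / a ^ 6 := by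
  have hu : u ≤ 4 / 9 := h1.trans (div_le_self (by norm_num) (by nlinarith))
  have h := Real.abs_log_sub_add_sum_range_le (x := u) (by rw [abs_of_nonneg h0]; linarith) 2
  rw [abs_of_nonneg h0] at h
  simp only [Finset.sum_range_succ, Finset.sum_range_zero] at h
  norm_num at h
  rw [add_comm]
  refine h.trans ?_
  have h3 : u ^ 3 ≤ (4 / 9 / a ^ 2) ^ 3 := by gcongr
  rw [div_le_iff₀ (by linarith)]
  have e : (4 / 9 / a ^ 2) ^ 3 = (64 / 729) * (1 / a ^ 6) := by field_simp; norm_num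
  have p : 0 ≤ 1 / a ^ 6 := by positivity
  nlinarith

lemma aux_t (t : ℝ) (h1 : -(1/4) ≤ t) (h2 : t ≤ 1/4) :
    |1 / (1 + t) ^ 2 - (1 - 2 * t + 3 * t ^ 2 - 4 * t ^ 3)| ≤ 16 * t ^ 4 ∧
    |1 / (1 + t) ^ 4 - (1 - 4 * t)| ≤ 60 * t ^ 2 := by
  have p : 0 < 1 + t := by linarith
  have q : (3/4 : ℝ) ^ 2 ≤ (1 + t) ^ 2 := by gcongr; linarith
  have q4 : (3/4 : ℝ) ^ 4 ≤ (1 + t) ^ 4 := by gcongr; linarith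
  have ht : |t| ≤ 1/4 := abs_le.2 ⟨h1, h2⟩
  have e1 : 1 / (1 + t) ^ 2 - (1 - 2 * t + 3 * t ^ 2 - 4 * t ^ 3)
      = t ^ 4 * ((5 + 4 * t) / (1 + t) ^ 2) := by field_simp; ring
  have e2 : 1 / (1 + t) ^ 4 - (1 - 4 * t)
      = t ^ 2 * ((10 + 20 * t + 15 * t ^ 2 + 4 * t ^ 3) / (1 + t) ^ 4) := by field_simp; ring
  have t2 : t ^ 2 ≤ 1 / 16 := by nlinarith
  constructor
  · rw [e1, abs_mul, abs_of_nonneg (by positivity : 0 ≤ t ^ 4), mul_comm]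
    gcongr
    rw [abs_of_nonneg (div_nonneg (by linarith) (by positivity)), div_le_iff₀ (by positivity)]
    nlinarith
  · rw [e2, abs_mul, abs_of_nonneg (by positivity : 0 ≤ t ^ 2), mul_comm]
    gcongr
    rw [abs_le, div_le_iff₀ (by positivity), le_div_iff₀ (by positivity)]
    constructor <;> nlinarith [sq_nonneg t, mul_nonneg (sq_nonneg t) (by linarith : 0 ≤ 1/4 - t), mul_nonneg (sq_nonneg t) (by linarith : 0 ≤ 1/4 + t)]

lemma aux_term (a s : ℝ) (ha : 1 ≤ a) (h1 : -a ≤ s) (h2 : s ≤ a) :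
    |Real.log (1 - 4 * a ^ 2 / (4 * a ^ 2 + s) ^ 2)⁻¹ -
      (1 / (4 * a ^ 2) * (1 - 2 * (s / (4 * a ^ 2)) + 3 * (s / (4 * a ^ 2)) ^ 2
        - 4 * (s / (4 * a ^ 2)) ^ 3) + 1 / (32 * a ^ 4) * (1 - 4 * (s / (4 * a ^ 2))))|
      ≤ 2 / a ^ 6 := by
  obtain ⟨u0, u1⟩ := aux_u a s ha h1
  have hl := aux_log2 a _ ha u0 u1
  have p1 : 0 < 4 * a ^ 2 + s := by nlinarith
  have a0 : 0 < a := by linarith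
  have habs : |s / (4 * a ^ 2)| ≤ 1 / (4 * a) := by
    rw [abs_div, abs_of_pos (by positivity : 0 < 4 * a ^ 2), div_le_div_iff₀ (by positivity) (by positivity)]
    have := abs_le.2 ⟨h1, h2⟩
    nlinarith
  set t := s / (4 * a ^ 2) with ht
  have hs : s = 4 * a ^ 2 * t := by rw [ht]; field_simp
  have hle : 1 / (4 * a) ≤ 1 / 4 := by
    apply one_div_le_one_div_of_le <;> linarith
  obtain ⟨b1, b2⟩ := abs_le.1 (habs.trans hle)
  obtain ⟨c1, c2⟩ := aux_t t b1 b2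
  have t2 : t ^ 2 ≤ (1 / (4 * a)) ^ 2 := by rw [← sq_abs]; gcongr
  have t4 : t ^ 4 ≤ ((1 / (4 * a)) ^ 2) ^ 2 := by
    rw [show t ^ 4 = (t ^ 2) ^ 2 by ring]; gcongr
  have p : 0 < 1 + t := by linarith
  have eu : 4 * a ^ 2 / (4 * a ^ 2 + s) ^ 2 = 1 / (4 * a ^ 2) * (1 / (1 + t) ^ 2) := by
    rw [hs, show 4 * a ^ 2 + 4 * a ^ 2 * t = 4 * a ^ 2 * (1 + t) by ring]
    field_simp
  rw [eu] at hl ⊢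
  have d1 : |1 / (4 * a ^ 2) * (1 / (1 + t) ^ 2 - (1 - 2 * t + 3 * t ^ 2 - 4 * t ^ 3))|
      ≤ 1 / 64 * (1 / a ^ 6) := by
    rw [abs_mul, abs_of_pos (by positivity : 0 < 1 / (4 * a ^ 2))]
    calc _ ≤ 1 / (4 * a ^ 2) * (16 * ((1 / (4 * a)) ^ 2) ^ 2) := by gcongr; linarith
      _ = _ := by field_simp; norm_num
  have d2 : |1 / (32 * a ^ 4) * (1 / (1 + t) ^ 4 - (1 - 4 * t))|
      ≤ 60 / 512 * (1 / a ^ 6) := by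
    rw [abs_mul, abs_of_pos (by positivity : 0 < 1 / (32 * a ^ 4))]
    calc _ ≤ 1 / (32 * a ^ 4) * (60 * (1 / (4 * a)) ^ 2) := by gcongr; linarith
      _ = _ := by field_simp; norm_num
  have sq : (1 / (4 * a ^ 2) * (1 / (1 + t) ^ 2)) ^ 2 / 2 = 1 / (32 * a ^ 4) * (1 / (1 + t) ^ 4) := by
    field_simp; norm_num
  rw [sq] at hl
  rw [Real.log_inv]
  have p6 : 0 < 1 / a ^ 6 := by positivity
  have e6 : 2 / a ^ 6 = 2 * (1 / a ^ 6) := by ring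
  rw [e6]
  rw [abs_le] at *
  constructor <;> nlinarith

lemma aux_sum (c0 c1 c2 c3 b : ℝ) (n : ℕ) :
    ∑ i ∈ Finset.range n, (c0 + c1 * (b - i) + c2 * (b - i) ^ 2 + c3 * (b - i) ^ 3)
    = c0 * n + c1 * (n * b - n * (n - 1) / 2)
      + c2 * (n * b ^ 2 - b * (n * (n - 1)) + n * (n - 1) * (2 * n - 1) / 6)
      + c3 * (n * b ^ 3 - 3 * b ^ 2 * (n * (n - 1) / 2) + 3 * b * (n * (n - 1) * (2 * n - 1) / 6)
        - n ^ 2 * (n - 1) ^ 2 / 4) := by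
  induction n with
  | zero => simp
  | succ k ih => rw [Finset.sum_range_succ, ih]; push_cast; ring

lemma aux_gpos (a : ℕ) (ha : 1 ≤ a) : 0 < ((gFn (4 * a ^ 2 - 1) a : ℚ) : ℝ) := by
  rw [aux_g a ha]
  refine Finset.prod_pos fun i hi => ?_
  rw [Finset.mem_range] at hi
  have hi' : (i : ℝ) + 1 ≤ 2 * a := by exact_mod_cast hi
  have ha' : (1 : ℝ) ≤ a := by exact_mod_cast ha
  obtain ⟨_, h⟩ := aux_u a (a - 1 - i) ha' (by linarith)
  have : 4 / 9 / (a : ℝ) ^ 2 ≤ 4 / 9 := div_le_self (by norm_num) (by nlinarith)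
  rw [inv_pos]
  linarith

lemma aux_logg (a : ℕ) (ha : 1 ≤ a) :
    |Real.log ((gFn (4 * a ^ 2 - 1) a : ℚ) : ℝ) - (1 / (2 * (a : ℝ)) + 7 / (32 * (a : ℝ) ^ 3))|
      ≤ 6 * (1 / (a : ℝ) ^ 5) := by
  have ha' : (1 : ℝ) ≤ a := by exact_mod_cast ha
  have a0 : (0 : ℝ) < a := by linarith
  have hne : ∀ i ∈ Finset.range (2 * a),
      (1 - 4 * (a : ℝ) ^ 2 / (4 * (a : ℝ) ^ 2 + (a - 1 - i)) ^ 2)⁻¹ ≠ 0 := by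
    have := (aux_gpos a ha).ne'
    rw [aux_g a ha, Finset.prod_ne_zero_iff] at this
    exact this
  rw [aux_g a ha, Real.log_prod hne]
  set P : ℝ → ℝ := fun s => (1 / (4 * (a : ℝ) ^ 2) * (1 - 2 * (s / (4 * (a : ℝ) ^ 2)) + 3 * (s / (4 * (a : ℝ) ^ 2)) ^ 2
        - 4 * (s / (4 * (a : ℝ) ^ 2)) ^ 3) + 1 / (32 * (a : ℝ) ^ 4) * (1 - 4 * (s / (4 * (a : ℝ) ^ 2)))) with hP
  have hsum : ∑ i ∈ Finset.range (2 * a), P (a - 1 - i)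
      = 1 / (2 * (a : ℝ)) + 7 / (32 * (a : ℝ) ^ 3) + (1 / 16) * (1 / (a : ℝ) ^ 5) := by
    have := aux_sum (1 / (4 * (a : ℝ) ^ 2) + 1 / (32 * (a : ℝ) ^ 4))
      (- (1 / (8 * (a : ℝ) ^ 4)) - 1 / (32 * (a : ℝ) ^ 6)) (3 / (64 * (a : ℝ) ^ 6))
      (-1 / (64 * (a : ℝ) ^ 8)) (a - 1) (2 * a)
    rw [Finset.sum_congr rfl (g := fun i : ℕ => P (a - 1 - i))] at this
    · rw [this]
      push_cast
      field_simp
      ring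
    · intro i _
      simp only [hP]
      field_simp
      ring
  have hb : |∑ i ∈ Finset.range (2 * a), (Real.log (1 - 4 * (a : ℝ) ^ 2 / (4 * (a : ℝ) ^ 2 + (a - 1 - i)) ^ 2)⁻¹ - P (a - 1 - i))| ≤ 4 * (1 / (a : ℝ) ^ 5) := by
    refine (Finset.abs_sum_le_sum_abs _ _).trans ?_
    calc _ ≤ ∑ i ∈ Finset.range (2 * a), 2 / (a : ℝ) ^ 6 := by
          refine Finset.sum_le_sum fun i hi => ?_
          rw [Finset.mem_range] at hi
          have hi' : (i : ℝ) + 1 ≤ 2 * a := by exact_mod_cast hi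
          have hi0 : (0 : ℝ) ≤ i := Nat.cast_nonneg i
          exact aux_term a (a - 1 - i) ha' (by linarith) (by linarith)
      _ = _ := by
          rw [Finset.sum_const, Finset.card_range, nsmul_eq_mul]
          push_cast
          field_simp
          norm_num
  rw [Finset.sum_sub_distrib, hsum] at hb
  have p : 0 < 1 / (a : ℝ) ^ 5 := by positivity
  rw [abs_le] at *
  constructor <;> linarith

lemma aux_h (a : ℕ) (ha : 1 ≤ a) :
    ((hFn (4 * a ^ 2 - 1) a : ℚ) : ℝ) =
      (1 + (a : ℝ) / (4 * a ^ 2 - 1)) / (1 - (a : ℝ) / (4 * a ^ 2 - 1)) := by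
  have h4 : a ≤ a ^ 2 := by nlinarith
  have ha' : (1 : ℝ) ≤ a := by exact_mod_cast ha
  have hc : ((4 * a ^ 2 - 1 : ℕ) : ℝ) = 4 * (a : ℝ) ^ 2 - 1 := by
    rw [Nat.cast_sub (by omega)]; push_cast; ring
  unfold hFn
  push_cast
  rw [hc]
  have p : 0 < 4 * (a : ℝ) ^ 2 - 1 := by nlinarith
  have p' : (a : ℝ) ^ 2 * 4 - 1 ≠ 0 := by rw [mul_comm]; exact p.ne'
  have e1 : 1 + (a : ℝ) / (4 * a ^ 2 - 1) = (4 * (a : ℝ) ^ 2 - 1 + a) / (4 * a ^ 2 - 1) := by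
    field_simp
  have e2 : 1 - (a : ℝ) / (4 * a ^ 2 - 1) = (4 * (a : ℝ) ^ 2 - 1 - a) / (4 * a ^ 2 - 1) := by
    field_simp
  rw [e1, e2, div_div_div_cancel_right₀ p.ne']

lemma aux_y (a : ℝ) (ha : 1 ≤ a) : 0 < a / (4 * a ^ 2 - 1) ∧ a / (4 * a ^ 2 - 1) ≤ 1 / (3 * a) := by
  have p : 0 < 4 * a ^ 2 - 1 := by nlinarith
  refine ⟨by positivity, ?_⟩
  rw [div_le_div_iff₀ p (by positivity)]
  nlinarith

lemma aux_y2 (a : ℝ) (ha : 1 ≤ a) : a / (4 * a ^ 2 - 1) ≤ 1 / 3 := by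
  refine (aux_y a ha).2.trans ?_
  apply one_div_le_one_div_of_le <;> linarith

lemma aux_hpos (a : ℕ) (ha : 1 ≤ a) : 0 < ((hFn (4 * a ^ 2 - 1) a : ℚ) : ℝ) := by
  have ha' : (1 : ℝ) ≤ a := by exact_mod_cast ha
  rw [aux_h a ha]
  have := aux_y2 a ha'
  have := (aux_y a ha').1
  apply div_pos <;> linarith

lemma aux_logh (a : ℕ) (ha : 1 ≤ a) :
    |Real.log ((hFn (4 * a ^ 2 - 1) a : ℚ) : ℝ) - (1 / (2 * (a : ℝ)) + 13 / (96 * (a : ℝ) ^ 3))|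
      ≤ 2 * (1 / (a : ℝ) ^ 5) := by
  have ha' : (1 : ℝ) ≤ a := by exact_mod_cast ha
  have a0 : (0 : ℝ) < a := by linarith
  rw [aux_h a ha]
  obtain ⟨y0, y1⟩ := aux_y a ha'
  have y2 := aux_y2 a ha'
  have p : 3 * (a : ℝ) ^ 2 ≤ 4 * (a : ℝ) ^ 2 - 1 := by nlinarith
  have p0 : 0 < 4 * (a : ℝ) ^ 2 - 1 := by nlinarith
  have p0' : (a : ℝ) ^ 2 * 4 - 1 ≠ 0 := by rw [mul_comm]; exact p0.ne'
  have k1 : |2 * ((a : ℝ) / (4 * a ^ 2 - 1)) - (1 / (2 * (a : ℝ)) + 1 / (8 * (a : ℝ) ^ 3))|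
      ≤ 1 / 24 * (1 / (a : ℝ) ^ 5) := by
    have e : 2 * ((a : ℝ) / (4 * a ^ 2 - 1)) - (1 / (2 * (a : ℝ)) + 1 / (8 * (a : ℝ) ^ 3))
       = 1 / (8 * (a : ℝ) ^ 3 * (4 * (a : ℝ) ^ 2 - 1)) := by
      field_simp
      ring
    rw [e, abs_of_pos (by positivity)]
    calc _ ≤ 1 / (8 * (a : ℝ) ^ 3 * (3 * (a : ℝ) ^ 2)) := by gcongr
      _ = _ := by field_simp; norm_num
  have k2 : |((a : ℝ) / (4 * a ^ 2 - 1)) ^ 3 - 1 / (64 * (a : ℝ) ^ 3)|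
      ≤ 48 / 1728 * (1 / (a : ℝ) ^ 5) := by
    have e : ((a : ℝ) / (4 * a ^ 2 - 1)) ^ 3 - 1 / (64 * (a : ℝ) ^ 3)
       = (48 * (a : ℝ) ^ 4 - 12 * (a : ℝ) ^ 2 + 1) / (64 * (a : ℝ) ^ 3 * (4 * (a : ℝ) ^ 2 - 1) ^ 3) := by
      field_simp
      ring
    have n0 : 0 ≤ 48 * (a : ℝ) ^ 4 - 12 * (a : ℝ) ^ 2 + 1 := by nlinarith
    rw [e, abs_of_nonneg (by positivity)]
    calc _ ≤ (48 * (a : ℝ) ^ 4) / (64 * (a : ℝ) ^ 3 * (3 * (a : ℝ) ^ 2) ^ 3) := by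
            gcongr; nlinarith
      _ = _ := by field_simp; norm_num
  set y := (a : ℝ) / (4 * a ^ 2 - 1)
  have l1 := Real.abs_log_sub_add_sum_range_le (x := y) (by rw [abs_of_pos y0]; linarith) 4
  have l2 := Real.abs_log_sub_add_sum_range_le (x := -y) (by rw [abs_neg, abs_of_pos y0]; linarith) 4
  rw [abs_neg] at l2
  rw [abs_of_pos y0] at l1 l2
  have hy5 : y ^ 5 / (1 - y) ≤ 1 / 162 * (1 / (a : ℝ) ^ 5) := by
    calc _ ≤ (1 / (3 * (a : ℝ))) ^ 5 / (2 / 3) := by gcongr; linarith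
      _ = _ := by field_simp; norm_num
  have l1' := l1.trans hy5
  have l2' := l2.trans hy5
  simp only [Finset.sum_range_succ, Finset.sum_range_zero, sub_neg_eq_add] at l1' l2'
  norm_num at l1' l2'
  rw [Real.log_div (by linarith) (by linarith)]
  have q : 0 < 1 / (a : ℝ) ^ 5 := by positivity
  have r1 : 13 / (96 * (a : ℝ) ^ 3) = 1 / (8 * (a : ℝ) ^ 3) + 2 / 3 * (1 / (64 * (a : ℝ) ^ 3)) := by
    field_simp; norm_num
  rw [r1]
  rw [← one_div] at l1' l2'
  have o : (-y) ^ 3 = - y ^ 3 := by ring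
  have o2 : (-y) ^ 4 = y ^ 4 := by ring
  simp only [o, o2, even_two, Even.neg_pow] at l2'
  rw [abs_le] at *
  constructor <;> linarith

theorem stmt12 :
    (fun a : ℕ => Real.log ((gFn (4 * a ^ 2 - 1) a : ℚ) : ℝ)
        - (1 / (2 * (a : ℝ)) + 7 / (32 * (a : ℝ) ^ 3)))
      =O[atTop] (fun a : ℕ => 1 / (a : ℝ) ^ 5) ∧
    (fun a : ℕ => Real.log ((hFn (4 * a ^ 2 - 1) a : ℚ) : ℝ)
        - (1 / (2 * (a : ℝ)) + 13 / (96 * (a : ℝ) ^ 3)))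
      =O[atTop] (fun a : ℕ => 1 / (a : ℝ) ^ 5) ∧
    (∀ᶠ a : ℕ in atTop, hFn (4 * a ^ 2 - 1) a < gFn (4 * a ^ 2 - 1) a) := by
  refine ⟨IsBigO.of_bound 6 ?_, IsBigO.of_bound 2 ?_, ?_⟩
  · filter_upwards [eventually_ge_atTop 1] with a ha
    rw [Real.norm_eq_abs, Real.norm_of_nonneg (by positivity)]
    exact aux_logg a ha
  · filter_upwards [eventually_ge_atTop 1] with a ha
    rw [Real.norm_eq_abs, Real.norm_of_nonneg (by positivity)]
    exact aux_logh a ha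
  · filter_upwards [eventually_ge_atTop 10] with a ha
    have g := aux_logg a (by omega)
    have h := aux_logh a (by omega)
    have ha' : (10 : ℝ) ≤ a := by exact_mod_cast ha
    have a0 : (0 : ℝ) < a := by linarith
    have k : 8 * (1 / (a : ℝ) ^ 5) < 7 / (32 * (a : ℝ) ^ 3) - 13 / (96 * (a : ℝ) ^ 3) := by
      have e : 7 / (32 * (a : ℝ) ^ 3) - 13 / (96 * (a : ℝ) ^ 3) = (a : ℝ) ^ 2 / 12 * (1 / (a : ℝ) ^ 5) := by
        field_simp; norm_num
      rw [e]
      gcongr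
      nlinarith
    have := (Real.log_lt_log_iff (aux_hpos a (by omega)) (aux_gpos a (by omega))).1 (by
      rw [abs_le] at *; linarith)
    exact_mod_cast this
end

section
/- For every fixed integer a ≥ 3, both l ↦ g_l(a)/h_l(a) and l ↦ g_l(a+1)/h_l(a+1) are strictly decreasing in the integer variable l over the interval 4a² ≤ l ≤ 4(a+1)² − 1; that is, for integers l, l′ with 4a² ≤ l < l′ ≤ 4(a+1)² − 1, one has g_{l′}(a)/h_{l′}(a) < g_l(a)/h_l(a) and g_{l′}(a+1)/h_{l′}(a+1) < g_l(a+1)/h_l(a+1). -/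
lemma desc_step (n k : ℕ) :
    ((n : ℚ) + 1) * (((n + k).descFactorial k : ℕ) : ℚ) * ((n + k + 1 : ℚ)) =
      ((n : ℚ) + 1) * (((n : ℚ) + 1) * (((n + k + 1).descFactorial k : ℕ) : ℚ)) := by
  have h := Nat.succ_descFactorial (n + k) k
  have e : n + k + 1 - k = n + 1 := by omega
  rw [e] at h
  have h' : ((n : ℚ) + 1) * (((n + k + 1).descFactorial k : ℕ) : ℚ) =
      ((n : ℚ) + k + 1) * (((n + k).descFactorial k : ℕ) : ℚ) := by exact_mod_cast h
  rw [h']; ring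

lemma desc_step' (n k : ℕ) :
    (((n + k + 1).descFactorial k : ℕ) : ℚ) =
      ((n : ℚ) + k + 1) * (((n + k).descFactorial k : ℕ) : ℚ) / ((n : ℚ) + 1) := by
  have hn : (n : ℚ) + 1 ≠ 0 := by positivity
  rw [eq_div_iff hn]
  have := mul_left_cancel₀ hn ((mul_assoc _ _ _).symm.trans (desc_step n k))
  linarith

lemma F_step (l j : ℕ) (hj : 1 ≤ j) (hl : 3 * j ≤ l) (hu : l + 2 ≤ 8 * j ^ 2) :
    gFn (l + 1) j / hFn (l + 1) j < gFn l j / hFn l j := by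
  obtain ⟨t, rfl⟩ := Nat.exists_eq_add_of_le hl
  have e1 : 3 * j + t + 1 + j = (t + 2 * j) + 2 * j + 1 := by ring
  have e2 : 3 * j + t + 1 + 3 * j = (t + 4 * j) + 2 * j + 1 := by ring
  have e3 : 3 * j + t + 1 - j = t + 2 * j + 1 := by omega
  have f1 : 3 * j + t + j = (t + 2 * j) + 2 * j := by ring
  have f2 : 3 * j + t + 3 * j = (t + 4 * j) + 2 * j := by ring
  have f3 : 3 * j + t - j = t + 2 * j := by omega
  unfold gFn hFn
  rw [e1, e2, e3, f1, f2, f3, desc_step', desc_step', desc_step']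
  have pA : (0 : ℚ) < (((t + 2 * j + 2 * j).descFactorial (2 * j) : ℕ) : ℚ) := by
    exact_mod_cast Nat.descFactorial_pos.2 (by omega)
  have pB : (0 : ℚ) < (((t + 4 * j + 2 * j).descFactorial (2 * j) : ℕ) : ℚ) := by
    exact_mod_cast Nat.descFactorial_pos.2 (by omega)
  have pC : (0 : ℚ) < (((t + 2 * j).descFactorial (2 * j) : ℕ) : ℚ) := by
    exact_mod_cast Nat.descFactorial_pos.2 (by omega)
  generalize (((t + 2 * j + 2 * j).descFactorial (2 * j) : ℕ) : ℚ) = A at *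
  generalize (((t + 4 * j + 2 * j).descFactorial (2 * j) : ℕ) : ℚ) = B at *
  generalize (((t + 2 * j).descFactorial (2 * j) : ℕ) : ℚ) = C at *
  have hjq : (1 : ℚ) ≤ j := by exact_mod_cast hj
  have huq : 3 * (j : ℚ) + t + 2 ≤ 8 * (j : ℚ) ^ 2 := by exact_mod_cast hu
  have htq : (0 : ℚ) ≤ t := by positivity
  push_cast
  generalize (j : ℚ) = x at *
  generalize (t : ℚ) = y at *
  obtain ⟨m, rfl⟩ : ∃ m, y = m - 1 - 3 * x := ⟨y + 1 + 3 * x, by ring⟩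
  have q1 : 0 < m - x := by linarith
  have q2 : 0 < m - 1 - x := by linarith
  have q3 : 0 < m - 3 * x := by linarith
  have q4 : 0 < m + x := by linarith
  have q5 : 0 < m + x - 1 := by linarith
  have q6 : 0 < m + 3 * x := by linarith
  have key : (m + x) ^ 2 * (m - 3 * x) * (m + x - 1) <
      (m - x) ^ 2 * (m + 3 * x) * (m - 1 - x) := by
    have h0 : 0 < 8 * m * x ^ 2 - m ^ 2 - 3 * x ^ 2 := by
      nlinarith [mul_nonneg (by linarith : 0 ≤ m - 1) (by linarith : 0 ≤ 8 * x ^ 2 - 1 - m)]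
    have h1 := mul_pos (by linarith : 0 < x) h0
    nlinarith
  have R : ∀ P Q : ℚ, P = Q * (((m + x) ^ 2 * (m - 3 * x) * (m + x - 1)) /
      ((m - x) ^ 2 * (m + 3 * x) * (m - 1 - x))) → 0 < Q → P < Q := by
    intro P Q h hQ
    rw [h]
    exact mul_lt_of_lt_one_right hQ ((div_lt_one (by positivity)).2 key)
  apply R
  · have r1 : m - 1 - 3 * x + 2 * x + 2 * x + 1 = m + x := by ring
    have r2 : m - 1 - 3 * x + 2 * x + 1 = m - x := by ring
    have r3 : m - 1 - 3 * x + 4 * x + 2 * x + 1 = m + 3 * x := by ring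
    have r4 : m - 1 - 3 * x + 4 * x + 1 = m + x := by ring
    have r5 : m - 1 - 3 * x + 1 = m - 3 * x := by ring
    have r6 : 3 * x + (m - 1 - 3 * x) + 1 = m := by ring
    have r7 : 3 * x + (m - 1 - 3 * x) + x = m + x - 1 := by ring
    have r8 : 3 * x + (m - 1 - 3 * x) - x = m - 1 - x := by ring
    simp only [r1, r2, r3, r4, r5, r6, r7, r8]
    field_simp
  · have r7 : 3 * x + (m - 1 - 3 * x) + x = m + x - 1 := by ring
    have r8 : 3 * x + (m - 1 - 3 * x) - x = m - 1 - x := by ring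
    rw [r7, r8]
    positivity

lemma F_anti (j l d : ℕ) (hj : 1 ≤ j) (hl : 3 * j ≤ l) (hu : l + d + 2 ≤ 8 * j ^ 2) :
    gFn (l + d + 1) j / hFn (l + d + 1) j < gFn l j / hFn l j := by
  induction d with
  | zero => exact F_step l j hj hl hu
  | succ d ih =>
    exact (F_step (l + d + 1) j hj (by omega) (by omega)).trans (ih (by omega))

/-- For every fixed integer `a ≥ 3`, both `l ↦ g_l(a)/h_l(a)` and `l ↦ g_l(a+1)/h_l(a+1)`
are strictly decreasing in `l` over `4a² ≤ l ≤ 4(a+1)² − 1`. -/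
theorem stmt13 (a : ℕ) (ha : 3 ≤ a) (l l' : ℕ)
    (h1 : 4 * a ^ 2 ≤ l) (h2 : l < l') (h3 : l' ≤ 4 * (a + 1) ^ 2 - 1) :
    gFn l' a / hFn l' a < gFn l a / hFn l a ∧
    gFn l' (a + 1) / hFn l' (a + 1) < gFn l (a + 1) / hFn l (a + 1) := by
  obtain ⟨d, rfl⟩ := Nat.exists_eq_add_of_lt h2
  have h4 : l + d + 1 + 1 ≤ 4 * (a + 1) ^ 2 := by
    have : 0 < 4 * (a + 1) ^ 2 := by positivity
    omega
  refine ⟨F_anti a l d (by omega) (by nlinarith) (by nlinarith),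
    F_anti (a + 1) l d (by omega) (by nlinarith) (by nlinarith)⟩
end

section
/- For every integer l ≥ 9, setting a_l = ⌊√l / 2⌋, the pairwise inequalities d_l(a_l + 1 + j) · Q_l(a_l + 1 + j) > −d_l(j) · Q_l(j) hold for every integer j with 1 ≤ j ≤ a_l (all indices involved lie in {1, …, τ} since 2a_l + 1 ≤ τ for l ≥ 9). -/
/-- `d_l(j) = g_l(j) − h_l(j)`. -/
def dFn (l j : ℕ) : ℚ := gFn l j - hFn l j

/-- `C_l(j) = (j(l−j)/(l+j)²) · binom(2(l+j)−1, l+j−1) · binom(4l−1−2(l+j), l+j−1)`. -/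
def cFn (l j : ℕ) : ℚ :=
  ((j : ℚ) * ((l : ℚ) - j) / ((l : ℚ) + j) ^ 2) *
    (Nat.choose (2 * (l + j) - 1) (l + j - 1) : ℚ) *
    (Nat.choose (4 * l - 1 - 2 * (l + j)) (l + j - 1) : ℚ)

/-- The probability function `Q_l(j) = C_l(j) / Σ_{i=1}^{τ} C_l(i)`, with `τ = ⌊l/3⌋`. -/
def qFn (l j : ℕ) : ℚ := cFn l j / ∑ i ∈ Finset.Icc 1 (l / 3), cFn l i

/-- numerator of the ratio of consecutive weights -/
def rNum (l k : ℕ) : ℕ := (2*l+2*k+1)*((l-3*k)*((l-3*k-1)*(l-3*k-2)))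
/-- denominator of the ratio of consecutive weights -/
def rDen (l k : ℕ) : ℕ := (l+k+1)^2*((2*l-2*k-1)*(l-k-1))

def prodF (f : ℕ → ℕ) (j : ℕ) : ℕ → ℕ
  | 0 => 1
  | n+1 => f (j+n) * prodF f j n

def allB (f : ℕ → Bool) : ℕ → Bool
  | 0 => true
  | n+1 => f n && allB f n

def gNn (l j : ℕ) : ℕ := (Nat.descFactorial (l + j) (2 * j))^2
def gDn (l j : ℕ) : ℕ := Nat.descFactorial (l + 3*j) (2 * j) * Nat.descFactorial (l - j) (2 * j)

def chk1 (l j b N D gNj gDj gNb gDb : ℕ) : Bool :=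
  Nat.blt (b*(l+j)*gDj*(gDb*(l+b))*N + j*(l+b)*gDb*(gDj*(l+j))*D)
    (b*(l+j)*gDj*(gNb*(l-b))*N + j*(l+b)*gDb*(gNj*(l-j))*D)
def chk (l j n : ℕ) : Bool :=
  chk1 l j (j+n) (prodF (rNum l) j n) (prodF (rDen l) j n) (gNn l j) (gDn l j)
    (gNn l (j+n)) (gDn l (j+n))
def chkA (n : ℕ) : Bool :=
  allB (fun i => Nat.ble (4*(n-1)^2+i) 8 || (Nat.ble 208 (4*(n-1)^2+i) ||
    allB (fun j => chk (4*(n-1)^2+i) (j+1) n) (n-1))) (8*n-4)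

def chk2 (l j b A B : ℕ) : Bool :=
  Nat.blt ((l+1)^2*(b^2*((l+j)*A) + j^2*((l+b)*B)))
    (4*(b^4*((l+j)*((l-b)*A)) + j^4*((l+b)*((l-j)*B))))
def chkP (l j n p q : ℕ) : Bool :=
  Nat.ble p (64*q) && chk2 l j (j+n) ((64*q-p)^64) ((64*q)^64)
def chkM (l j n : ℕ) : Bool := chkP l j n (4*n^2+8*n*j-n) (l-2*(j+n))
def chkB (n : ℕ) : Bool :=
  allB (fun i => Nat.ble (4*(n-1)^2+i) 207 ||
    allB (fun j => chkM (4*(n-1)^2+i) (j+1) n) (n-1)) (8*n-4)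

theorem chkA_all : allB (fun n => chkA (n+2)) 7 = true := by decide +kernel
theorem chkB_all : allB (fun n => chkB (n+8)) 12 = true := by decide +kernel

theorem allB_get (f : ℕ → Bool) (n : ℕ) (h : allB f n = true) (i : ℕ) (hi : i < n) :
    f i = true := by
  induction n with
  | zero => omega
  | succ n ih =>
    simp only [allB, Bool.and_eq_true] at h
    rcases Nat.lt_succ_iff_lt_or_eq.mp hi with h1 | h1
    · exact ih h.2 h1
    · rw [h1]; exact h.1

theorem chk_get (l j n : ℕ) (hl : 9 ≤ l) (hl2 : l < 208) (hn1 : 4*(n-1)^2 ≤ l) (hn2 : l < 4*n^2)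
    (hj : 1 ≤ j) (hjn : j + 1 ≤ n) : chk l j n = true := by
  have hn9 : n < 9 := by
    by_contra h
    obtain ⟨m, rfl⟩ : ∃ m, n = m + 9 := ⟨n - 9, by omega⟩
    have : m + 9 - 1 = m + 8 := by omega
    rw [this] at hn1
    nlinarith
  have h0 := allB_get _ _ chkA_all (n-2) (by omega)
  have e : n - 2 + 2 = n := by omega
  simp only [e, chkA] at h0
  have h1 := allB_get _ _ h0 (l - 4*(n-1)^2) (by
    obtain ⟨m, rfl⟩ : ∃ m, n = m + 1 := ⟨n - 1, by omega⟩
    simp only [Nat.add_sub_cancel] at *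
    have : 4*(m+1)^2 = 4*m^2 + 8*m+4 := by ring
    omega)
  have e2 : 4*(n-1)^2 + (l - 4*(n-1)^2) = l := by omega
  simp only [e2, Bool.or_eq_true, Nat.ble_eq] at h1
  rcases h1 with h1 | h1 | h1
  · omega
  · omega
  · have h2 := allB_get _ _ h1 (j-1) (by omega)
    have e3 : j - 1 + 1 = j := by omega
    simpa only [e3] using h2

theorem chkM_get (l j n : ℕ) (hl : 208 ≤ l) (hn : n < 20) (hn1 : 4*(n-1)^2 ≤ l)
    (hn2 : l < 4*n^2)
    (hj : 1 ≤ j) (hjn : j + 1 ≤ n) : chkM l j n = true := by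
  have hn9 : 8 ≤ n := by
    by_contra h
    have : n ≤ 7 := by omega
    nlinarith
  have h0 := allB_get _ _ chkB_all (n-8) (by omega)
  have e : n - 8 + 8 = n := by omega
  simp only [e, chkB] at h0
  have h1 := allB_get _ _ h0 (l - 4*(n-1)^2) (by
    obtain ⟨m, rfl⟩ : ∃ m, n = m + 1 := ⟨n - 1, by omega⟩
    simp only [Nat.add_sub_cancel] at *
    have : 4*(m+1)^2 = 4*m^2 + 8*m+4 := by ring
    omega)
  have e2 : 4*(n-1)^2 + (l - 4*(n-1)^2) = l := by omega
  simp only [e2, Bool.or_eq_true, Nat.ble_eq] at h1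
  rcases h1 with h1 | h1
  · omega
  · have h2 := allB_get _ _ h1 (j-1) (by omega)
    have e3 : j - 1 + 1 = j := by omega
    simpa only [e3] using h2
/-- weight -/
def eFn (l k : ℕ) : ℚ :=
  (Nat.choose (2 * (l + k) - 1) (l + k - 1) : ℚ) *
    (Nat.choose (4 * l - 1 - 2 * (l + k)) (l + k - 1) : ℚ) / ((l : ℚ) + k)

theorem cFn_eq (l k : ℕ) (hl : 1 ≤ l) :
    cFn l k = (k : ℚ) * ((l : ℚ) - k) / ((l : ℚ) + k) * eFn l k := by
  have : (0 : ℚ) < (l : ℚ) + k := by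
    have : (1 : ℚ) ≤ l := by exact_mod_cast hl
    positivity
  unfold cFn eFn
  field_simp

theorem eFn_pos (l k : ℕ) (hk : 1 ≤ k) (h : 3 * k ≤ l) : 0 < eFn l k := by
  unfold eFn
  have h1 : 0 < Nat.choose (2 * (l + k) - 1) (l + k - 1) := Nat.choose_pos (by omega)
  have h2 : 0 < Nat.choose (4 * l - 1 - 2 * (l + k)) (l + k - 1) := Nat.choose_pos (by omega)
  have h3 : 0 < l + k := by omega
  have h1' : (0 : ℚ) < (Nat.choose (2 * (l + k) - 1) (l + k - 1) : ℚ) := by exact_mod_cast h1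
  have h2' : (0 : ℚ) < (Nat.choose (4 * l - 1 - 2 * (l + k)) (l + k - 1) : ℚ) := by
    exact_mod_cast h2
  have h3' : (0 : ℚ) < (l : ℚ) + k := by exact_mod_cast h3
  positivity

theorem cFn_pos (l k : ℕ) (hk : 1 ≤ k) (h : 3 * k ≤ l) : 0 < cFn l k := by
  rw [cFn_eq l k (by omega)]
  have := eFn_pos l k hk h
  have h1 : (0 : ℚ) < (l : ℚ) - k := by
    have : (k : ℚ) < l := by exact_mod_cast (by omega : k < l)
    linarith
  have h2 : (0 : ℚ) < k := by exact_mod_cast hk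
  positivity

theorem choose_half (m : ℕ) : 2 * Nat.choose (2 * (m + 1) - 1) m = Nat.centralBinom (m + 1) := by
  rw [Nat.centralBinom_eq_two_mul_choose]
  have e : 2 * (m + 1) - 1 = 2 * m + 1 := by omega
  have e2 : 2 * (m + 1) = (2 * m + 1) + 1 := by omega
  rw [e, e2, Nat.choose_succ_succ, Nat.choose_symm_half]
  ring

theorem choose_step1 (m : ℕ) :
    (m + 2) * Nat.choose (2 * (m + 2) - 1) (m + 1) =
      2 * (2 * m + 3) * Nat.choose (2 * (m + 1) - 1) m := by
  have h1 := choose_half m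
  have h2 := choose_half (m + 1)
  have h3 := Nat.succ_mul_centralBinom_succ (m + 1)
  rw [← h1, ← h2] at h3
  have e : m + 1 + 1 = m + 2 := rfl
  rw [e] at h3
  nlinarith

theorem choose_step2 (p q : ℕ) :
    Nat.choose (p + q + 1) (p + 1) * ((p + 1) * ((p + q + 3) * (p + q + 2))) =
      Nat.choose (p + q + 3) p * ((q + 3) * ((q + 2) * (q + 1))) := by
  have h1 := Nat.add_choose_mul_factorial_mul_factorial (p + 1) q
  have h2 := Nat.add_choose_mul_factorial_mul_factorial p (q + 3)
  have e1 : p + 1 + q = p + q + 1 := by ring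
  have e2 : p + (q + 3) = p + q + 3 := by ring
  rw [e1] at h1
  rw [e2] at h2
  have s1 : (p + q + 1).choose q = (p + q + 1).choose (p + 1) :=
    Nat.choose_symm_of_eq_add (by ring)
  have s2 : (p + q + 3).choose (q + 3) = (p + q + 3).choose p :=
    Nat.choose_symm_of_eq_add (by ring)
  rw [s1] at h1
  rw [s2] at h2
  have h3 : (p + q + 3).factorial = (p + q + 3) * ((p + q + 2) * (p + q + 1).factorial) := by
    rw [Nat.factorial_succ, Nat.factorial_succ]
  have h4 : (q + 3).factorial = (q + 3) * ((q + 2) * ((q + 1) * q.factorial)) := by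
    rw [Nat.factorial_succ, Nat.factorial_succ, Nat.factorial_succ]
  rw [h3, h4, ← h1, Nat.factorial_succ] at h2
  have hp : 0 < p.factorial * q.factorial := by positivity
  apply Nat.eq_of_mul_eq_mul_right hp
  linarith

theorem eFn_step (l k : ℕ) (h : 3 * (k + 1) ≤ l) :
    eFn l (k + 1) * (rDen l k : ℚ) = eFn l k * (rNum l k : ℚ) := by
  obtain ⟨q, rfl⟩ : ∃ q, l = 3 * k + 3 + q := ⟨l - (3 * k + 3), by omega⟩
  have h1 := choose_step1 (4 * k + 2 + q)
  have h2 := choose_step2 (4 * k + 2 + q) q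
  unfold eFn rDen rNum
  have a1 : 2 * (3 * k + 3 + q + (k + 1)) - 1 = 2 * (4 * k + 2 + q + 2) - 1 := by omega
  have a2 : 3 * k + 3 + q + (k + 1) - 1 = 4 * k + 2 + q + 1 := by omega
  have a3 : 4 * (3 * k + 3 + q) - 1 - 2 * (3 * k + 3 + q + (k + 1)) = 4 * k + 2 + q + q + 1 := by
    omega
  have b1 : 2 * (3 * k + 3 + q + k) - 1 = 2 * (4 * k + 2 + q + 1) - 1 := by omega
  have b2 : 3 * k + 3 + q + k - 1 = 4 * k + 2 + q := by omega
  have b3 : 4 * (3 * k + 3 + q) - 1 - 2 * (3 * k + 3 + q + k) = 4 * k + 2 + q + q + 3 := by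
    omega
  have c1 : 3 * k + 3 + q - 3 * k = q + 3 := by omega
  have c2 : 2 * (3 * k + 3 + q) - 2 * k - 1 = 4 * k + 5 + 2 * q := by omega
  have c3 : 3 * k + 3 + q - k - 1 = 2 * k + 2 + q := by omega
  have c4 : q + 3 - 1 = q + 2 := by omega
  have c5 : q + 3 - 2 = q + 1 := by omega
  rw [a1, a2, a3, b1, b2, b3, c1, c2, c3, c4, c5]
  generalize Nat.choose (2 * (4 * k + 2 + q + 2) - 1) (4 * k + 2 + q + 1) = A at *
  generalize Nat.choose (2 * (4 * k + 2 + q + 1) - 1) (4 * k + 2 + q) = B at *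
  generalize Nat.choose (4 * k + 2 + q + q + 1) (4 * k + 2 + q + 1) = X at *
  generalize Nat.choose (4 * k + 2 + q + q + 3) (4 * k + 2 + q) = Y at *
  have h1' : ((4 * k + 2 + q + 2 : ℚ)) * A = 2 * (2 * (4 * k + 2 + q) + 3) * B := by
    exact_mod_cast h1
  have h2' : (X : ℚ) * ((4 * k + 2 + q + 1) * ((4 * k + 2 + q + q + 3) * (4 * k + 2 + q + q + 2)))
      = Y * ((q + 3) * ((q + 2) * (q + 1))) := by
    exact_mod_cast h2
  push_cast
  have p1 : (0 : ℚ) < 3 * k + 3 + q + (k + 1) := by positivity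
  have p2 : (0 : ℚ) < 3 * k + 3 + q + k := by positivity
  rw [div_mul_eq_mul_div, div_mul_eq_mul_div, div_eq_div_iff p1.ne' p2.ne']
  have h3 : ((4 * k + 2 + q + 2 : ℚ)) * A * ((X : ℚ) * ((4 * k + 2 + q + 1) * ((4 * k + 2 + q + q + 3) * (4 * k + 2 + q + q + 2)))) = 2 * (2 * (4 * k + 2 + q) + 3) * B * (Y * ((q + 3) * ((q + 2) * (q + 1)))) := by
    rw [h1', h2']
  linear_combination ((4 * k + 4 + q : ℚ)) * h3 / 2

theorem eFn_prod (l j n : ℕ) (h : 3 * (j + n) ≤ l) :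
    eFn l (j + n) * (prodF (rDen l) j n : ℚ) = eFn l j * (prodF (rNum l) j n : ℚ) := by
  induction n with
  | zero => simp [prodF]
  | succ n ih =>
    have h1 := ih (by omega)
    have h2 := eFn_step l (j + n) (by omega)
    simp only [prodF]
    push_cast
    rw [← add_assoc]
    linear_combination (prodF (rDen l) j n : ℚ) * h2 + (rNum l (j+n) : ℚ) * h1

theorem rDen_pos (l k : ℕ) (h : 3 * (k + 1) ≤ l) : 0 < rDen l k := by
  unfold rDen
  have h1 : 0 < 2*l-2*k-1 := by omega
  have h2 : 0 < l-k-1 := by omega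
  positivity

theorem prodF_pos (l j n : ℕ) (h : 3 * (j + n) ≤ l) : 0 < prodF (rDen l) j n := by
  induction n with
  | zero => simp [prodF]
  | succ n ih =>
    have h1 := ih (by omega)
    have h2 := rDen_pos l (j + n) (by omega)
    simp only [prodF]
    positivity

theorem dc_eq (l k : ℕ) (hk : 1 ≤ k) (h : 3 * k ≤ l) :
    dFn l k * cFn l k =
      k * ((gNn l k : ℚ) * ((l - k : ℕ) : ℚ) - gDn l k * (l + k)) / (gDn l k * (l + k)) * eFn l k
      ∧ 0 < gDn l k := by
  have hg : 0 < gDn l k := by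
    unfold gDn
    exact Nat.mul_pos (Nat.descFactorial_pos.mpr (by omega)) (Nat.descFactorial_pos.mpr (by omega))
  refine ⟨?_, hg⟩
  rw [cFn_eq l k (by omega)]
  have hg' : (0 : ℚ) < gDn l k := by exact_mod_cast hg
  have e : gFn l k = (gNn l k : ℚ) / gDn l k := by
    unfold gFn gNn gDn; push_cast; rfl
  have h1 : (0 : ℚ) < (l : ℚ) - k := by
    have : (k : ℚ) < l := by exact_mod_cast (by omega : k < l)
    linarith
  have h2 : (0 : ℚ) < (l : ℚ) + k := by
    have : (1 : ℚ) ≤ k := by exact_mod_cast hk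
    positivity
  rw [dFn, e, hFn, Nat.cast_sub (by omega)]
  field_simp

theorem exact_case (l j n : ℕ) (hj : 1 ≤ j) (h : 3 * (j + n) ≤ l) (hc : chk l j n = true) :
    0 < dFn l (j + n) * cFn l (j + n) + dFn l j * cFn l j := by
  obtain ⟨e1, p1⟩ := dc_eq l (j + n) (by omega) h
  obtain ⟨e2, p2⟩ := dc_eq l j hj (by omega)
  rw [e1, e2]
  have hE := eFn_prod l j n h
  have hD := prodF_pos l j n h
  have hej := eFn_pos l j hj (by omega)
  unfold chk chk1 at hc
  rw [Nat.blt_eq] at hc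
  generalize hb : j + n = b at *
  generalize prodF (rDen l) j n = D at *
  generalize prodF (rNum l) j n = N at *
  have hlb : 0 < l + b := by omega
  have hlj : 0 < l + j := by omega
  have hc' : ((b*(l+j)*gDn l j*(gDn l b*(l+b))*N + j*(l+b)*gDn l b*(gDn l j*(l+j))*D : ℕ) : ℚ) <
    ((b*(l+j)*gDn l j*(gNn l b*(l-b))*N + j*(l+b)*gDn l b*(gNn l j*(l-j))*D : ℕ) : ℚ) := by
    exact_mod_cast hc
  generalize l - b = lb at *
  generalize l - j = lj at *
  generalize gDn l j = gdj at *
  generalize gDn l b = gdb at *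
  generalize gNn l j = gnj at *
  generalize gNn l b = gnb at *
  push_cast at hc'
  have q1 : (0 : ℚ) < gdj := by exact_mod_cast p2
  have q2 : (0 : ℚ) < gdb := by exact_mod_cast p1
  have q3 : (0 : ℚ) < D := by exact_mod_cast hD
  have q4 : (0 : ℚ) < (l : ℚ) + b := by exact_mod_cast hlb
  have q5 : (0 : ℚ) < (l : ℚ) + j := by exact_mod_cast hlj
  have eb : eFn l b = eFn l j * N / D := by
    field_simp; linarith
  rw [eb]
  have : (b : ℚ) * (gnb * lb - gdb * (l + b)) / (gdb * (l + b)) * (eFn l j * N / D) +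
      j * (gnj * lj - gdj * (l + j)) / (gdj * (l + j)) * eFn l j =
      eFn l j / (D * (gdb * (l+b)) * (gdj * (l+j))) *
      ((b*(l+j)*gdj*(gnb*lb)*N + j*(l+b)*gdb*(gnj*lj)*D) -
       (b*(l+j)*gdj*(gdb*(l+b))*N + j*(l+b)*gdb*(gdj*(l+j))*D)) := by
    field_simp
    ring
  rw [this]
  apply mul_pos
  · positivity
  · linarith
theorem g_partial (l k : ℕ) (hk : 1 ≤ k) (h : 3 * k ≤ l) (N : ℕ) (hN : N ≤ 2 * k) :
    1 + 4 * (k : ℚ)^2 * (1 / ((l : ℚ) + k + 1 - N) - 1 / ((l : ℚ) + k + 1)) ≤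
      ∏ i ∈ Finset.range N, (((l + k - i : ℕ) : ℚ)^2 /
        (((l + 3 * k - i : ℕ) : ℚ) * ((l - k - i : ℕ) : ℚ))) := by
  induction N with
  | zero => simp
  | succ N ih =>
    have ih := ih (by omega)
    rw [Finset.prod_range_succ]
    obtain ⟨m, hm⟩ : ∃ m, l + k = m + N := ⟨l + k - N, by omega⟩
    have e1 : l + k - N = m := by omega
    have e2 : l + 3 * k - N = m + 2 * k := by omega
    have e3 : l - k - N = m - 2 * k := by omega
    have hm2 : 2 * k + 1 ≤ m := by omega
    rw [e1, e2, e3, Nat.cast_sub (by omega)]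
    have hm' : (l : ℚ) + k = m + N := by exact_mod_cast hm
    have hm2' : 2 * (k : ℚ) + 1 ≤ m := by exact_mod_cast hm2
    have hk' : (1 : ℚ) ≤ k := by exact_mod_cast hk
    have hN' : (0 : ℚ) ≤ N := by positivity
    push_cast
    have hm0 : (0 : ℚ) < m := by linarith
    have f1 : (l : ℚ) + k + 1 - N = m + 1 := by linarith
    have f2 : (l : ℚ) + k + 1 - (N + 1) = m := by linarith
    rw [f1] at ih
    rw [f2]
    have hS : 0 ≤ 1 / ((m : ℚ) + 1) - 1 / ((l : ℚ) + k + 1) := by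
      rw [sub_nonneg]
      apply one_div_le_one_div_of_le <;> linarith
    set S := 1 / ((m : ℚ) + 1) - 1 / ((l : ℚ) + k + 1) with hSdef
    have hx : 1 + 4 * (k : ℚ)^2 * (1 / (m : ℚ) - 1 / (m + 1)) ≤
        (m : ℚ)^2 / ((m + 2 * k) * (m - 2 * k)) := by
      have hp : (0 : ℚ) < (m + 2 * k) * (m - 2 * k) := by
        apply mul_pos <;> linarith
      rw [le_div_iff₀ hp]
      have : (1 / (m : ℚ) - 1 / (m + 1)) = 1 / (m * (m + 1)) := by
        field_simp; ring
      rw [this]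
      have h5 : (1 : ℚ) / (m * (m + 1)) * ((m + 2 * k) * (m - 2 * k)) ≤ 1 := by
        rw [one_div_mul_eq_div, div_le_one (by positivity)]
        nlinarith
      nlinarith [mul_le_mul_of_nonneg_left h5 (by positivity : (0 : ℚ) ≤ 4 * k^2)]
    have hx0 : 0 ≤ 1 / (m : ℚ) - 1 / (m + 1) := by
      rw [sub_nonneg]
      apply one_div_le_one_div_of_le <;> linarith
    set x := 1 / (m : ℚ) - 1 / (m + 1) with hxdef
    have e : 1 / (m : ℚ) - 1 / ((l : ℚ) + k + 1) = S + x := by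
      rw [hSdef, hxdef]; ring
    rw [e]
    calc 1 + 4 * (k : ℚ)^2 * (S + x) ≤ (1 + 4 * (k : ℚ)^2 * S) * (1 + 4 * (k : ℚ)^2 * x) := by
          have : 0 ≤ (4 * (k : ℚ)^2 * S) * (4 * (k : ℚ)^2 * x) := by positivity
          linarith
      _ ≤ _ := by
          apply mul_le_mul ih hx (by positivity)
          exact le_trans (by positivity) ih

theorem g_lower (l k : ℕ) (hk : 1 ≤ k) (h : 3 * k ≤ l) :
    1 + 8 * (k : ℚ)^3 / ((l : ℚ) + 1)^2 ≤ gFn l k := by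
  have h1 := g_partial l k hk h (2 * k) le_rfl
  have e : gFn l k = ∏ i ∈ Finset.range (2 * k), (((l + k - i : ℕ) : ℚ)^2 /
        (((l + 3 * k - i : ℕ) : ℚ) * ((l - k - i : ℕ) : ℚ))) := by
    unfold gFn
    rw [Nat.descFactorial_eq_prod_range, Nat.descFactorial_eq_prod_range,
      Nat.descFactorial_eq_prod_range, Finset.prod_div_distrib, Finset.prod_mul_distrib,
      Finset.prod_pow]
    push_cast
    rfl
  rw [e]
  refine le_trans ?_ h1
  have hk' : (1 : ℚ) ≤ k := by exact_mod_cast hk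
  have hl' : 3 * (k : ℚ) ≤ l := by exact_mod_cast h
  push_cast
  have p1 : (0 : ℚ) < (l : ℚ) + k + 1 - 2 * k := by linarith
  have p2 : (0 : ℚ) < (l : ℚ) + k + 1 := by linarith
  have e2 : 4 * (k : ℚ)^2 * (1 / ((l : ℚ) + k + 1 - 2 * k) - 1 / ((l : ℚ) + k + 1)) =
      8 * (k : ℚ)^3 / (((l : ℚ) + k + 1 - 2 * k) * ((l : ℚ) + k + 1)) := by
    rw [div_sub_div _ _ p1.ne' p2.ne', ← mul_div_assoc]
    congr 1
    ring
  rw [e2]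
  have : 8 * (k : ℚ)^3 / ((l : ℚ) + 1)^2 ≤
      8 * (k : ℚ)^3 / (((l : ℚ) + k + 1 - 2 * k) * ((l : ℚ) + k + 1)) := by
    apply div_le_div_of_nonneg_left (by positivity) (by positivity)
    nlinarith
  linarith

theorem dc_lower (l k : ℕ) (hk : 1 ≤ k) (h : 3 * k ≤ l) :
    2 * (k : ℚ)^2 * (4 * (k : ℚ)^2 * (l - k) - ((l : ℚ) + 1)^2) / ((l + k) * ((l : ℚ) + 1)^2)
      * eFn l k ≤ dFn l k * cFn l k := by
  have hE := eFn_pos l k hk h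
  have hk' : (1 : ℚ) ≤ k := by exact_mod_cast hk
  have hl' : 3 * (k : ℚ) ≤ l := by exact_mod_cast h
  have h1 : (0 : ℚ) < (l : ℚ) - k := by linarith
  have h2 : (0 : ℚ) < (l : ℚ) + k := by linarith
  have h3 : (0 : ℚ) < (l : ℚ) + 1 := by linarith
  rw [cFn_eq l k (by omega), ← mul_assoc]
  apply mul_le_mul_of_nonneg_right _ hE.le
  have hd : 8 * (k : ℚ)^3 / ((l : ℚ) + 1)^2 - 2 * k / (l - k) ≤ dFn l k := by
    have := g_lower l k hk h
    unfold dFn hFn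
    have e : ((l : ℚ) + k) / (l - k) = 1 + 2 * k / (l - k) := by
      field_simp; ring
    rw [e]; linarith
  have hp : 0 ≤ (k : ℚ) * ((l : ℚ) - k) / ((l : ℚ) + k) := by positivity
  refine le_trans (le_of_eq ?_) (mul_le_mul_of_nonneg_right hd hp)
  field_simp
  ring

theorem combine (l j b : ℕ) (ρ : ℚ) (hj : 1 ≤ j) (hjb : j ≤ b) (h : 3 * b ≤ l)
    (hE : ρ * eFn l j ≤ eFn l b)
    (hG : 0 ≤ 4 * (b : ℚ)^2 * (l - b) - ((l : ℚ) + 1)^2)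
    (hc : 0 < (b : ℚ)^2 * (l + j) * (4 * (b : ℚ)^2 * (l - b) - ((l : ℚ) + 1)^2) * ρ +
      (j : ℚ)^2 * (l + b) * (4 * (j : ℚ)^2 * (l - j) - ((l : ℚ) + 1)^2)) :
    0 < dFn l b * cFn l b + dFn l j * cFn l j := by
  have h1 := dc_lower l b (by omega) h
  have h2 := dc_lower l j hj (by omega)
  have hEj := eFn_pos l j hj (by omega)
  have hj' : (1 : ℚ) ≤ j := by exact_mod_cast hj
  have hb' : (j : ℚ) ≤ b := by exact_mod_cast hjb
  have hl' : 3 * (b : ℚ) ≤ l := by exact_mod_cast h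
  have p1 : (0 : ℚ) < (l : ℚ) + b := by linarith
  have p2 : (0 : ℚ) < (l : ℚ) + j := by linarith
  have p3 : (0 : ℚ) < (l : ℚ) + 1 := by linarith
  set Gb := 4 * (b : ℚ)^2 * (l - b) - ((l : ℚ) + 1)^2
  set Gj := 4 * (j : ℚ)^2 * (l - j) - ((l : ℚ) + 1)^2
  have h3 : 2 * (b : ℚ)^2 * Gb / ((l + b) * ((l : ℚ) + 1)^2) * (ρ * eFn l j) ≤
      2 * (b : ℚ)^2 * Gb / ((l + b) * ((l : ℚ) + 1)^2) * eFn l b := by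
    apply mul_le_mul_of_nonneg_left hE
    positivity
  have h4 : 2 * (b : ℚ)^2 * Gb / ((l + b) * ((l : ℚ) + 1)^2) * (ρ * eFn l j) +
      2 * (j : ℚ)^2 * Gj / ((l + j) * ((l : ℚ) + 1)^2) * eFn l j =
      2 * eFn l j / ((l + b) * (l + j) * ((l : ℚ) + 1)^2) *
      ((b : ℚ)^2 * (l + j) * Gb * ρ + (j : ℚ)^2 * (l + b) * Gj) := by
    field_simp
  have h5 : 0 < 2 * eFn l j / ((l + b) * (l + j) * ((l : ℚ) + 1)^2) *
      ((b : ℚ)^2 * (l + j) * Gb * ρ + (j : ℚ)^2 * (l + b) * Gj) := by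
    apply mul_pos _ hc
    positivity
  linarith

theorem poly_step (u k : ℝ) (hk : 1 ≤ k) (hu : 11 * k + 20 ≤ u) :
    6*u^3*((u+3*k+1)^2*((2*u+2*k-1)*(u+k-1))) ≤
    (6*u^3+6*u^2*(8*k+3)+3*u*(8*k+3)^2+(8*k+3)^3)*((2*u+6*k+1)*((u-k)*((u-k-1)*(u-k-2)))) := by
  obtain ⟨m, rfl⟩ : ∃ m, k = 1 + m := ⟨k - 1, by ring⟩
  obtain ⟨v, rfl⟩ : ∃ v, u = 11 * (1 + m) + 20 + v := ⟨u - (11 * (1 + m) + 20), by ring⟩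
  have hm : 0 ≤ m := by linarith
  have hv : 0 ≤ v := by linarith
  rw [← sub_nonneg]
  ring_nf
  positivity

theorem exp_step (l k : ℕ) (hk : 1 ≤ k) (h : 13 * k + 20 ≤ l) :
    Real.exp (-((8 * k + 3) / ((l : ℝ) - 2 * k))) * (eFn l k : ℝ) ≤ (eFn l (k + 1) : ℝ) := by
  have hs := eFn_step l k (by omega)
  have hD := rDen_pos l k (by omega)
  have hE := eFn_pos l k hk (by omega)
  have hE' : (0 : ℝ) < (eFn l k : ℝ) := by exact_mod_cast hE
  have hs' : (eFn l (k + 1) : ℝ) * (rDen l k : ℝ) = (eFn l k : ℝ) * (rNum l k : ℝ) := by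
    exact_mod_cast hs
  have hD' : (0 : ℝ) < (rDen l k : ℝ) := by exact_mod_cast hD
  have hk' : (1 : ℝ) ≤ k := by exact_mod_cast hk
  have hl' : 13 * (k : ℝ) + 20 ≤ l := by exact_mod_cast h
  have hp := poly_step ((l : ℝ) - 2 * k) k hk' (by linarith)
  have eN : (rNum l k : ℝ) = (2*((l : ℝ) - 2 * k)+6*k+1)*((((l : ℝ) - 2 * k)-k)*
      ((((l : ℝ) - 2 * k)-k-1)*(((l : ℝ) - 2 * k)-k-2))) := by
    unfold rNum
    rw [Nat.sub_sub, Nat.sub_sub]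
    push_cast [Nat.cast_sub (by omega : 3 * k ≤ l), Nat.cast_sub (by omega : 3 * k + 1 ≤ l),
      Nat.cast_sub (by omega : 3 * k + 2 ≤ l)]
    ring
  have eD : (rDen l k : ℝ) = (((l : ℝ) - 2 * k)+3*k+1)^2*((2*((l : ℝ) - 2 * k)+2*k-1)*
      (((l : ℝ) - 2 * k)+k-1)) := by
    unfold rDen
    rw [Nat.sub_sub, Nat.sub_sub]
    push_cast [Nat.cast_sub (by omega : 2 * k + 1 ≤ 2 * l), Nat.cast_sub (by omega : k + 1 ≤ l)]
    ring
  rw [← eN, ← eD] at hp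
  have hu : (0 : ℝ) < (l : ℝ) - 2 * k := by linarith
  generalize (l : ℝ) - 2 * k = u at *
  set θ := (8 * (k : ℝ) + 3) / u with hθ
  have hθ0 : 0 ≤ θ := by positivity
  have hexp : 1 + θ + θ^2/2 + θ^3/6 ≤ Real.exp θ := by
    have := Real.sum_le_exp_of_nonneg hθ0 4
    simp [Finset.sum_range_succ, Nat.factorial] at this
    linarith
  have hw : 8 * (k : ℝ) + 3 = θ * u := by rw [hθ]; field_simp
  rw [hw] at hp
  have hp2 : (rDen l k : ℝ) ≤ (1 + θ + θ^2/2 + θ^3/6) * rNum l k := by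
    have h6 : 0 < 6 * u^3 := by positivity
    apply le_of_mul_le_mul_left _ h6
    calc _ ≤ _ := hp
      _ = _ := by ring
  have hN0 : (0 : ℝ) ≤ rNum l k := by positivity
  have hp3 : (rDen l k : ℝ) ≤ Real.exp θ * rNum l k :=
    hp2.trans (mul_le_mul_of_nonneg_right hexp hN0)
  rw [Real.exp_neg]
  have hx := Real.exp_pos θ
  rw [inv_mul_le_iff₀ hx]
  apply le_of_mul_le_mul_right _ hD'
  calc (eFn l k : ℝ) * rDen l k ≤ (eFn l k : ℝ) * (Real.exp θ * rNum l k) :=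
        mul_le_mul_of_nonneg_left hp3 hE'.le
    _ = Real.exp θ * ((eFn l k : ℝ) * rNum l k) := by ring
    _ = _ := by rw [← hs']; ring

theorem exp_lower (l j n : ℕ) (hj : 1 ≤ j) (h : 13 * (j + n) + 7 ≤ l) :
    Real.exp (-((4 * (n : ℝ)^2 + 8 * n * j - n) / ((l : ℝ) - 2 * (j + n)))) * (eFn l j : ℝ) ≤
      (eFn l (j + n) : ℝ) := by
  have hq : (0 : ℝ) < (l : ℝ) - 2 * (j + n) := by
    have : 13 * ((j : ℝ) + n) + 7 ≤ l := by exact_mod_cast h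
    have : (0 : ℝ) ≤ (j : ℝ) + n := by positivity
    linarith
  have key : ∀ i ≤ n,
      Real.exp (-((4 * (i : ℝ)^2 + 8 * i * j - i) / ((l : ℝ) - 2 * (j + n)))) * (eFn l j : ℝ) ≤
      (eFn l (j + i) : ℝ) := by
    intro i
    induction i with
    | zero => intro _; simp
    | succ i ih =>
      intro hi
      have ih := ih (by omega)
      have hs := exp_step l (j + i) (by omega) (by omega)
      rw [← add_assoc]
      refine le_trans ?_ hs
      have hi' : (i : ℝ) + 1 ≤ n := by exact_mod_cast hi
      have hmono : (8 * ((j + i : ℕ) : ℝ) + 3) / ((l : ℝ) - 2 * ((j + i : ℕ) : ℝ)) ≤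
          (8 * ((j + i : ℕ) : ℝ) + 3) / ((l : ℝ) - 2 * (j + n)) := by
        apply div_le_div_of_nonneg_left (by positivity) hq
        push_cast
        linarith
      have hexp := Real.exp_le_exp.mpr (neg_le_neg hmono)
      have e : Real.exp (-((4 * ((i + 1 : ℕ) : ℝ)^2 + 8 * ((i + 1 : ℕ) : ℝ) * j - ((i + 1 : ℕ) : ℝ))
          / ((l : ℝ) - 2 * (j + n)))) =
          Real.exp (-((8 * ((j + i : ℕ) : ℝ) + 3) / ((l : ℝ) - 2 * (j + n)))) *
          Real.exp (-((4 * (i : ℝ)^2 + 8 * i * j - i) / ((l : ℝ) - 2 * (j + n)))) := by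
        rw [← Real.exp_add]
        congr 1
        push_cast
        ring
      rw [e, mul_assoc]
      have hE : (0 : ℝ) ≤ (eFn l j : ℝ) := by
        exact_mod_cast (eFn_pos l j hj (by omega)).le
      apply mul_le_mul hexp ih (by positivity) (by positivity)
  exact key n le_rfl

theorem uni (x ε : ℚ) (hε : 0 < ε) (hε2 : ε ≤ 1/20) (hx : ε ≤ x) (hx1 : x ≤ 1) :
    x^2 * (1 + 1/800 - x^2 + 278/1000 * ε * x^3) <
    986/1000 * (1+x)^2 * (2*x + x^2 - ε*(278/1000*(1+x)^3 + 1/40)) *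
      (672/10000 * (2574/1000 - 2379/1000 * x)) := by
  have hx0 : 0 < x := by linarith
  have hr : 0 < 2574/1000 - 2379/1000 * x := by linarith
  rcases le_or_gt (1/20) x with h | h
  · have h1 : x^2 * (1 + 1/800 - x^2 + 278/1000 * ε * x^3) ≤
        x^2 * (1 + 1/800 - x^2 + 278/1000 * (1/20) * x^3) := by gcongr
    have h2 : 986/1000 * (1+x)^2 * (2*x + x^2 - (1/20)*(278/1000*(1+x)^3 + 1/40)) *
      (672/10000 * (2574/1000 - 2379/1000 * x)) ≤
      986/1000 * (1+x)^2 * (2*x + x^2 - ε*(278/1000*(1+x)^3 + 1/40)) *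
      (672/10000 * (2574/1000 - 2379/1000 * x)) := by gcongr
    refine lt_of_le_of_lt h1 (lt_of_lt_of_le ?_ h2)
    rw [← sub_pos]
    have e : 986/1000 * (1+x)^2 * (2*x + x^2 - (1/20)*(278/1000*(1+x)^3 + 1/40)) *
      (672/10000 * (2574/1000 - 2379/1000 * x)) -
      x^2 * (1 + 1/800 - x^2 + 278/1000 * (1/20) * x^3) =
      (1277581795899366533/73509189062500000000)*((x-1/20)^0*(1-x)^6) +
      (345544383814090233/735091890625000000)*((x-1/20)^1*(1-x)^5) +
      (3434076780530189/2297162158203125)*((x-1/20)^2*(1-x)^4) +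
      (5971602062488691/3675459453125000)*((x-1/20)^3*(1-x)^3) +
      (167068914210261/183772972656250)*((x-1/20)^4*(1-x)^2) +
      (46570685103424/91886486328125)*((x-1/20)^5*(1-x)^1) +
      (670424336544/3675459453125)*((x-1/20)^6*(1-x)^0) := by ring
    rw [e]
    have a : 0 ≤ x - 1/20 := by linarith
    have b : 0 ≤ 1 - x := by linarith
    rcases lt_or_eq_of_le b with b | b
    · positivity
    · have : x = 1 := by linarith
      subst this
      norm_num
  · have c3 : (1+x)^3 ≤ 1.16 := by
      calc (1+x)^3 ≤ (1+1/20)^3 := by gcongr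
        _ ≤ 1.16 := by norm_num
    have c4 : 1.64 * x ≤ 2*x + x^2 - ε*(278/1000*(1+x)^3 + 1/40) := by
      have : ε*(278/1000*(1+x)^3 + 1/40) ≤ x * (278/1000*1.16 + 1/40) := by gcongr
      nlinarith [sq_nonneg x]
    have c5 : (1:ℚ) ≤ (1+x)^2 := by nlinarith
    have c6 : (2.4:ℚ) ≤ 2574/1000 - 2379/1000 * x := by linarith
    have c4' : 0 ≤ 2*x + x^2 - ε*(278/1000*(1+x)^3 + 1/40) := le_trans (by positivity) c4
    have c7 : 986/1000 * 1 * (1.64 * x) * (672/10000 * 2.4) ≤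
      986/1000 * (1+x)^2 * (2*x + x^2 - ε*(278/1000*(1+x)^3 + 1/40)) *
      (672/10000 * (2574/1000 - 2379/1000 * x)) := by gcongr
    refine lt_of_lt_of_le ?_ c7
    have c8 : 1 + 1/800 - x^2 + 278/1000 * ε * x^3 ≤ 1.1 := by
      have : 278/1000 * ε * x^3 ≤ 278/1000 * (1/20) * (1/20)^3 := by gcongr
      nlinarith [sq_nonneg x]
    have c9 : x^2 * (1 + 1/800 - x^2 + 278/1000 * ε * x^3) ≤ x^2 * 1.1 := by gcongr
    nlinarith

theorem exp27 : (0.0672 : ℝ) ≤ Real.exp (-2.7) := by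
  have h := Real.exp_one_lt_d9
  have h1 : Real.exp (2.7) ^ 10 ≤ (1/0.0672)^10 := by
    rw [← Real.exp_nat_mul]
    have : ((10:ℕ):ℝ) * 2.7 = (27:ℕ) * 1 := by norm_num
    rw [this, Real.exp_nat_mul]
    calc Real.exp 1 ^ 27 ≤ 2.7182818286 ^ 27 := by gcongr
      _ ≤ _ := by norm_num
  have h2 : Real.exp 2.7 ≤ 1/0.0672 := le_of_pow_le_pow_left₀ (by norm_num) (by norm_num) h1
  rw [Real.exp_neg]
  rw [le_inv_comm₀ (by norm_num) (Real.exp_pos _)]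
  simpa using h2

theorem Gb_nonneg (l j n : ℕ) (hl : 208 ≤ l) (hj : 1 ≤ j) (hjn : j + 1 ≤ n)
    (hn1 : 4 * ((n : ℚ) - 1)^2 ≤ l) (hn2 : (l : ℚ) + 1 ≤ 4 * (n : ℚ)^2) :
    0 ≤ 4 * (((j + n : ℕ) : ℚ))^2 * (l - ((j + n : ℕ) : ℚ)) - ((l : ℚ) + 1)^2 := by
  have hj' : (1 : ℚ) ≤ j := by exact_mod_cast hj
  have hjn' : (j : ℚ) + 1 ≤ n := by exact_mod_cast hjn
  have hl' : (208 : ℚ) ≤ l := by exact_mod_cast hl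
  have hn8 : (7 : ℚ) ≤ n := by
    by_contra hcon
    push Not at hcon
    nlinarith
  push_cast
  have h1 : (l : ℚ) + 8 * n + 5 ≤ 4 * ((j : ℚ) + n)^2 := by nlinarith
  have h2 : (l : ℚ) - 2 * n + 1 ≤ l - (j + n) := by linarith
  have h3 : 0 ≤ (l : ℚ) - 2 * n + 1 := by nlinarith
  have h4 : ((l : ℚ) + 8 * n + 5) * (l - 2 * n + 1) ≤ 4 * ((j : ℚ) + n)^2 * (l - (j + n)) :=
    mul_le_mul h1 h2 h3 (by positivity)
  have h5 : (l : ℚ) * n ≥ 4 * (n - 1)^2 * n := by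
    apply mul_le_mul_of_nonneg_right hn1; linarith
  nlinarith

theorem side (l j n : ℕ) (hl : 208 ≤ l) (hj : 1 ≤ j) (hjn : j + 1 ≤ n)
    (hn1 : 4 * (n - 1)^2 ≤ l) : 13 * (j + n) + 7 ≤ l := by
  obtain ⟨a, rfl⟩ : ∃ a, n = a + 1 := ⟨n - 1, by omega⟩
  simp only [Nat.add_sub_cancel] at hn1
  rcases Nat.lt_or_ge a 8 with h | h
  · have : j ≤ a := by omega
    interval_cases a <;> omega
  · have : 8 * a ≤ a^2 := by nlinarith
    omega

theorem mid_case (l j n : ℕ) (hl : 208 ≤ l) (hj : 1 ≤ j) (hjn : j + 1 ≤ n)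
    (hn1 : 4 * (n - 1)^2 ≤ l) (hn1' : 4 * ((n : ℚ) - 1)^2 ≤ l)
    (hn2' : (l : ℚ) + 1 ≤ 4 * (n : ℚ)^2) (hc : chkM l j n = true) :
    0 < dFn l (j + n) * cFn l (j + n) + dFn l j * cFn l j := by
  have hs := side l j n hl hj hjn hn1
  have hG := Gb_nonneg l j n hl hj hjn hn1' hn2'
  have hx := exp_lower l j n hj hs
  unfold chkM chkP chk2 at hc
  rw [Bool.and_eq_true, Nat.ble_eq, Nat.blt_eq] at hc
  obtain ⟨hp, hc⟩ := hc
  have hpn : n ≤ 4*n^2+8*n*j := by nlinarith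
  have ep : ((4*n^2+8*n*j-n : ℕ) : ℚ) = 4 * (n:ℚ)^2 + 8 * n * j - n := by
    rw [Nat.cast_sub hpn]; push_cast; ring
  have eq : ((l - 2*(j+n) : ℕ) : ℚ) = (l : ℚ) - 2 * (j + n) := by
    rw [Nat.cast_sub (by omega)]; push_cast; ring
  have epR : ((4*n^2+8*n*j-n : ℕ) : ℝ) = 4 * (n:ℝ)^2 + 8 * n * j - n := by
    rw [Nat.cast_sub hpn]; push_cast; ring
  have eqR : ((l - 2*(j+n) : ℕ) : ℝ) = (l : ℝ) - 2 * (j + n) := by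
    rw [Nat.cast_sub (by omega)]; push_cast; ring
  have hq0 : 0 < l - 2*(j+n) := by omega
  rw [← epR, ← eqR] at hx
  generalize 4*n^2+8*n*j-n = p at *
  generalize l - 2*(j+n) = q at *
  have hq0' : (0 : ℝ) < q := by exact_mod_cast hq0
  have hq0'' : (0 : ℚ) < q := by exact_mod_cast hq0
  have hp' : (p : ℝ) ≤ 64 * q := by exact_mod_cast hp
  have hexp : (1 - (p / q : ℝ) / (64:ℕ))^64 ≤ Real.exp (-(p / q : ℝ)) := by
    apply Real.one_sub_div_pow_le_exp_neg
    rw [div_le_iff₀ hq0']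
    exact_mod_cast hp
  have hEj : (0:ℝ) ≤ (eFn l j : ℝ) := by exact_mod_cast (eFn_pos l j hj (by omega)).le
  set ρ : ℚ := ((64*q-p : ℕ) : ℚ)^64 / ((64 * q : ℕ) : ℚ)^64 with hρ
  have hρR : (ρ : ℝ) = (1 - (p / q : ℝ) / (64:ℕ))^64 := by
    rw [hρ, ← div_pow]
    push_cast [Nat.cast_sub hp]
    congr 1
    field_simp
  have hE : ρ * eFn l j ≤ eFn l (j + n) := by
    have : (ρ : ℝ) * (eFn l j : ℝ) ≤ (eFn l (j + n) : ℝ) := by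
      rw [hρR]
      exact le_trans (mul_le_mul_of_nonneg_right hexp hEj) hx
    exact_mod_cast this
  apply combine l j (j + n) ρ hj (by omega) (by omega) hE hG
  have hlb : j + n ≤ l := by omega
  have hlj : j ≤ l := by omega
  generalize j + n = b at *
  have hB : (0 : ℚ) < ((64 * q : ℕ) : ℚ)^64 := by positivity
  have hc' := (Nat.cast_lt (α := ℚ)).mpr hc
  rw [Nat.cast_mul, Nat.cast_mul 4, Nat.cast_add, Nat.cast_add] at hc'
  simp only [Nat.cast_mul (b^2), Nat.cast_mul (j^2), Nat.cast_mul (b^4), Nat.cast_mul (j^4),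
    Nat.cast_mul (l+j), Nat.cast_mul (l+b), Nat.cast_mul (l-b), Nat.cast_mul (l-j),
    Nat.cast_pow (64*q), Nat.cast_pow (64*q-p), Nat.cast_sub hlb, Nat.cast_sub hlj] at hc'
  have eA : ((64*q-p : ℕ) : ℚ)^64 = ρ * ((64 * q : ℕ) : ℚ)^64 := by
    rw [hρ]; field_simp
  rw [eA] at hc'
  generalize ((64 * q : ℕ) : ℚ)^64 = B at *
  push_cast at hc'
  refine (mul_pos_iff_of_pos_right hB).mp ?_
  linarith

set_option maxHeartbeats 2000000 in
theorem large_case (l j n : ℕ) (hl : 208 ≤ l) (hn : 20 ≤ n) (hj : 1 ≤ j) (hjn : j + 1 ≤ n)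
    (hn1 : 4 * (n - 1)^2 ≤ l) (hn1' : 4 * ((n : ℚ) - 1)^2 ≤ l)
    (hn2' : (l : ℚ) + 1 ≤ 4 * (n : ℚ)^2) :
    0 < dFn l (j + n) * cFn l (j + n) + dFn l j * cFn l j := by
  have hs := side l j n hl hj hjn hn1
  have hG := Gb_nonneg l j n hl hj hjn hn1' hn2'
  have hx := exp_lower l j n hj hs
  have hnQ : (20 : ℚ) ≤ n := by exact_mod_cast hn
  have hjQ : (1 : ℚ) ≤ j := by exact_mod_cast hj
  have hjnQ : (j : ℚ) + 1 ≤ n := by exact_mod_cast hjn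
  have hsQ : 13 * ((j : ℚ) + n) + 7 ≤ l := by exact_mod_cast hs
  have hq : (0 : ℚ) < (l : ℚ) - 2 * (j + n) := by linarith
  have hEj : (0:ℝ) ≤ (eFn l j : ℝ) := by exact_mod_cast (eFn_pos l j hj (by omega)).le
  set Θ : ℚ := (4 * (n : ℚ)^2 + 8 * n * j - n) / ((l : ℚ) - 2 * (j + n)) with hΘ
  have hΘ1 : Θ ≤ 1126/1000 + 2379/1000 * (j / n) := by
    rw [hΘ, div_le_iff₀ hq]
    have h1 : (1126/1000 + 2379/1000 * ((j:ℚ) / n)) * (4 * ((n : ℚ) - 1)^2 - 2 * (j + n)) ≤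
        (1126/1000 + 2379/1000 * ((j:ℚ) / n)) * ((l : ℚ) - 2 * (j + n)) := by
      gcongr
    refine le_trans ?_ h1
    have hn0 : (0 : ℚ) < n := by linarith
    apply le_of_mul_le_mul_left _ hn0
    have e : (n : ℚ) * ((1126/1000 + 2379/1000 * ((j:ℚ) / n)) * (4 * ((n : ℚ) - 1)^2 - 2 * (j + n)))
      = (1126/1000 * n + 2379/1000 * j) * (4 * ((n : ℚ) - 1)^2 - 2 * (j + n)) := by
      field_simp
    rw [e]
    have a1 : 0 ≤ (n : ℚ) * (504/1000 * n^2 - 10260/1000 * n + 4504/1000) := by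
      apply mul_nonneg hn0.le; nlinarith
    have a2 : 0 ≤ (j : ℚ) * (n * (1516/1000 * n - 26042/1000) - 4758/1000 * j + 9516/1000) := by
      apply mul_nonneg (by linarith); nlinarith
    nlinarith
  have hjn1 : (j : ℚ) / n ≤ 1 := by
    rw [div_le_one (by linarith)]; linarith
  set x : ℚ := (j : ℚ) / n with hxdef
  have hexp : (0.0672 * (2574/1000 - 2379/1000 * x) : ℝ) ≤ Real.exp (-(Θ : ℝ)) := by
    have h1 := (Rat.cast_le (K := ℝ)).mpr hΘ1
    push_cast at h1
    have h2 : (x : ℝ) ≤ 1 := by exact_mod_cast hjn1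
    have h3 : Real.exp (-(Θ : ℝ)) = Real.exp (-2.7) * Real.exp (2.7 - Θ) := by
      rw [← Real.exp_add]; congr 1; ring
    rw [h3]
    have h4 := Real.add_one_le_exp (2.7 - (Θ : ℝ))
    apply mul_le_mul exp27 _ _ (Real.exp_pos _).le
    · refine le_trans ?_ h4; norm_num; linarith
    · linarith
  set ρ : ℚ := 672/10000 * (2574/1000 - 2379/1000 * x) with hρ
  have hρ0 : 0 ≤ ρ := by rw [hρ]; linarith
  have hE : ρ * eFn l j ≤ eFn l (j + n) := by
    have : (ρ : ℝ) * (eFn l j : ℝ) ≤ (eFn l (j + n) : ℝ) := by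
      have e : (ρ : ℝ) = 0.0672 * (2574/1000 - 2379/1000 * x) := by
        rw [hρ]; push_cast; norm_num
      rw [e]
      refine le_trans (mul_le_mul_of_nonneg_right hexp hEj) ?_
      rw [hΘ]
      push_cast
      exact hx
    exact_mod_cast this
  apply combine l j (j + n) ρ hj (by omega) (by omega) hE hG
  push_cast
  have hn0 : (0 : ℚ) < n := by linarith
  have hε : (0 : ℚ) < 1 / n := by positivity
  have hε2 : 1 / (n : ℚ) ≤ 1/20 := by
    apply one_div_le_one_div_of_le <;> linarith
  have hxε : 1 / (n : ℚ) ≤ x := by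
    rw [hxdef]; gcongr
  have hu := uni x (1 / n) hε hε2 hxε hjn1
  rw [← hρ] at hu
  have ej : (j : ℚ) = x * n := by rw [hxdef]; field_simp
  have hK : (n : ℚ)^2 ≤ 278/1000 * l := by
    have : (n : ℚ)^2 ≤ 278/1000 * (4 * ((n : ℚ) - 1)^2) := by
      have := mul_nonneg (sub_nonneg.mpr hnQ) hn0.le
      linarith
    linarith
  have hl0 : (0 : ℚ) < l := by linarith
  have hx0 : 0 < x := by positivity
  have hl1 : ((l : ℚ) + 1)^2 ≤ l * (4 * n^2 + 2) := by
    have := mul_le_mul_of_nonneg_left hn2' hl0.le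
    linarith
  set gb := 2*x + x^2 - (1/(n:ℚ))*(278/1000*(1+x)^3 + 1/40) with hgb
  set gj := 1 + 1/800 - x^2 + 278/1000 * (1/(n:ℚ)) * x^3 with hgj
  have T1 : 4 * (n:ℚ)^2 * l * gb ≤ 4 * ((j : ℚ) + n)^2 * (l - (j + n)) - ((l : ℚ) + 1)^2 := by
    have e1 : 4 * (n:ℚ)^2 * l * gb =
        4 * n^2 * l * (2 * x + x^2) - 4 * l * (278/1000) * n * (1+x)^3 - l * n / 10 := by
      rw [hgb]; field_simp; ring
    have e2 : 4 * ((j : ℚ) + n)^2 * (l - (j + n)) = 4 * n^2 * (1+x)^2 * l - 4 * n^3 * (1+x)^3 := by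
      rw [ej]; ring
    have e3 : 4 * (n : ℚ)^3 * (1+x)^3 ≤ 4 * l * (278/1000) * n * (1+x)^3 := by
      have := mul_le_mul_of_nonneg_right hK (by positivity : (0:ℚ) ≤ 4 * n * (1+x)^3)
      linarith
    have e4 : 2 * (l : ℚ) ≤ l * n / 10 := by
      have := mul_le_mul_of_nonneg_left hnQ hl0.le
      linarith
    rw [e1, e2]
    linarith
  have T2 : -(4 * (n:ℚ)^2 * l * gj) ≤ 4 * (j : ℚ)^2 * (l - j) - ((l : ℚ) + 1)^2 := by
    have e1 : 4 * (n:ℚ)^2 * l * gj =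
        4 * n^2 * l * (1 - x^2) + n^2 * l / 200 + 4 * l * (278/1000) * n * x^3 := by
      rw [hgj]; field_simp; ring
    have e2 : 4 * (j : ℚ)^2 * (l - j) = 4 * n^2 * x^2 * l - 4 * n^3 * x^3 := by
      rw [ej]; ring
    have e3 : 4 * (n : ℚ)^3 * x^3 ≤ 4 * l * (278/1000) * n * x^3 := by
      have := mul_le_mul_of_nonneg_right hK (by positivity : (0:ℚ) ≤ 4 * n * x^3)
      linarith
    have e4 : 2 * (l : ℚ) ≤ n^2 * l / 200 := by
      have h400 : (400 : ℚ) ≤ n^2 := by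
        have := mul_le_mul hnQ hnQ (by norm_num) hn0.le
        linarith
      have := mul_le_mul_of_nonneg_right h400 hl0.le
      linarith
    rw [e1, e2]
    linarith
  have T3 : 986/1000 * ((l : ℚ) + (j + n)) ≤ l + j := by
    have := mul_le_mul_of_nonneg_right hnQ hn0.le
    have h7 : 20 * (n : ℚ) ≤ 278/1000 * l := by linarith
    linarith
  have hb0 : (0 : ℚ) < (l : ℚ) + (j + n) := by linarith
  have hG' : 0 ≤ 4 * ((j : ℚ) + n)^2 * (l - (j + n)) - ((l : ℚ) + 1)^2 := by
    push_cast at hG; exact hG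
  set Gb := 4 * ((j : ℚ) + n)^2 * (l - (j + n)) - ((l : ℚ) + 1)^2
  set Gj := 4 * (j : ℚ)^2 * (l - j) - ((l : ℚ) + 1)^2
  have U1 : ((j : ℚ) + n)^2 * (986/1000 * ((l : ℚ) + (j + n))) * (4 * (n:ℚ)^2 * l * gb) * ρ ≤
      ((j : ℚ) + n)^2 * (l + j) * Gb * ρ := by
    apply mul_le_mul_of_nonneg_right _ hρ0
    calc ((j : ℚ) + n)^2 * (986/1000 * ((l : ℚ) + (j + n))) * (4 * (n:ℚ)^2 * l * gb)
        ≤ ((j : ℚ) + n)^2 * (986/1000 * ((l : ℚ) + (j + n))) * Gb := by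
          apply mul_le_mul_of_nonneg_left T1; positivity
      _ ≤ _ := by
          apply mul_le_mul_of_nonneg_right _ hG'
          apply mul_le_mul_of_nonneg_left T3; positivity
  have U2 : (j : ℚ)^2 * (l + (j + n)) * (-(4 * (n:ℚ)^2 * l * gj)) ≤
      (j : ℚ)^2 * (l + (j + n)) * Gj := by
    apply mul_le_mul_of_nonneg_left T2; positivity
  have U3 : ((j : ℚ) + n)^2 * (986/1000 * ((l : ℚ) + (j + n))) * (4 * (n:ℚ)^2 * l * gb) * ρ +
      (j : ℚ)^2 * (l + (j + n)) * (-(4 * (n:ℚ)^2 * l * gj)) =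
      4 * (n:ℚ)^4 * l * (l + (j + n)) * (986/1000 * (1+x)^2 * gb * ρ - x^2 * gj) := by
    have e1 : (j : ℚ) + n = n * (1 + x) := by rw [ej]; ring
    have e2 : (j : ℚ)^2 = x^2 * n^2 := by rw [ej]; ring
    rw [e2]
    have e3 : ((j : ℚ) + n)^2 = n^2 * (1 + x)^2 := by rw [e1]; ring
    rw [e3]
    ring
  have U4 : 0 < 4 * (n:ℚ)^4 * l * (l + (j + n)) * (986/1000 * (1+x)^2 * gb * ρ - x^2 * gj) := by
    apply mul_pos
    · positivity
    · linarith
  linarith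

theorem main_case (l j n : ℕ) (hl : 9 ≤ l) (hj : 1 ≤ j) (hjn : j + 1 ≤ n)
    (hn1 : 4 * (n - 1)^2 ≤ l) (hn2 : l < 4 * n^2) :
    3 * (j + n) ≤ l ∧ 0 < dFn l (j + n) * cFn l (j + n) + dFn l j * cFn l j := by
  have h3 : 3 * (j + n) ≤ l := by
    obtain ⟨a, rfl⟩ : ∃ a, n = a + 1 := ⟨n - 1, by omega⟩
    simp only [Nat.add_sub_cancel] at hn1
    rcases Nat.lt_or_ge a 3 with h | h
    · have : j ≤ a := by omega
      interval_cases a <;> omega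
    · have : 3 * a ≤ a^2 := by nlinarith
      omega
  refine ⟨h3, ?_⟩
  rcases Nat.lt_or_ge l 208 with h | h
  · exact exact_case l j n hj h3 (chk_get l j n hl h hn1 hn2 hj hjn)
  · have hn1' : 4 * ((n : ℚ) - 1)^2 ≤ l := by
      have := (Nat.cast_le (α := ℚ)).mpr hn1
      push_cast [Nat.cast_sub (by omega : 1 ≤ n)] at this
      exact this
    have hn2' : (l : ℚ) + 1 ≤ 4 * (n : ℚ)^2 := by exact_mod_cast hn2
    rcases Nat.lt_or_ge n 20 with h20 | h20
    · exact mid_case l j n h hj hjn hn1 hn1' hn2' (chkM_get l j n h h20 hn1 hn2 hj hjn)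
    · exact large_case l j n h h20 hj hjn hn1 hn1' hn2'

/-- For every integer `l ≥ 9`, with `a_l = ⌊√l/2⌋`, the pairwise inequalities
`d_l(a_l+1+j) · Q_l(a_l+1+j) > −d_l(j) · Q_l(j)` hold for every `1 ≤ j ≤ a_l`. -/
theorem stmt15 (l : ℕ) (hl : 9 ≤ l) (j : ℕ) (hj1 : 1 ≤ j)
    (hj2 : j ≤ ⌊Real.sqrt l / 2⌋₊) :
    -(dFn l j * qFn l j)
      < dFn l (⌊Real.sqrt l / 2⌋₊ + 1 + j) * qFn l (⌊Real.sqrt l / 2⌋₊ + 1 + j) := by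
  have hs0 : 0 ≤ Real.sqrt l := Real.sqrt_nonneg _
  have hs2 : Real.sqrt l ^ 2 = l := Real.sq_sqrt (Nat.cast_nonneg l)
  have hf1 : ((⌊Real.sqrt l / 2⌋₊ : ℕ) : ℝ) ≤ Real.sqrt l / 2 := Nat.floor_le (by positivity)
  have hf2 : Real.sqrt l / 2 < ((⌊Real.sqrt l / 2⌋₊ : ℕ) : ℝ) + 1 := Nat.lt_floor_add_one _
  generalize ⌊Real.sqrt l / 2⌋₊ = a at *
  have hn1 : 4 * (a + 1 - 1)^2 ≤ l := by
    rw [Nat.add_sub_cancel]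
    have h0 : (0 : ℝ) ≤ a := Nat.cast_nonneg a
    have : 4 * (a : ℝ)^2 ≤ l := by nlinarith
    exact_mod_cast this
  have hn2 : l < 4 * (a + 1)^2 := by
    have : (l : ℝ) < 4 * ((a : ℝ) + 1)^2 := by nlinarith
    exact_mod_cast this
  obtain ⟨h3, hm⟩ := main_case l j (a + 1) hl hj1 (by omega) hn1 hn2
  rw [add_comm j (a + 1)] at hm
  have hS : 0 < ∑ i ∈ Finset.Icc 1 (l / 3), cFn l i := by
    apply Finset.sum_pos
    · intro i hi
      rw [Finset.mem_Icc] at hi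
      exact cFn_pos l i hi.1 (by omega)
    · exact ⟨1, by rw [Finset.mem_Icc]; omega⟩
  unfold qFn
  generalize ∑ i ∈ Finset.Icc 1 (l / 3), cFn l i = S at *
  rw [← mul_div_assoc, ← mul_div_assoc, ← neg_div]
  apply div_lt_div_of_pos_right _ hS
  linarith
end

section
/- For every integer l ≥ 9, the expectation of d_l under the probability function Q_l is strictly positive: Σ_{j=1}^{τ} d_l(j) · Q_l(j) > 0, where τ = ⌊l/3⌋. -/
/-- auxiliary closed form -/
def auxA (l j : ℕ) : ℚ :=
  ((2 * l + 2 * j).factorial : ℚ) * ((2 * l - 2 * j).factorial : ℚ) /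
    (((l + j).factorial : ℚ) ^ 3 * ((l - 3 * j).factorial : ℚ))

def auxG (l j : ℕ) : ℚ :=
  ((l + j).factorial : ℚ) ^ 3 * ((l - 3 * j).factorial : ℚ) /
    (((l - j).factorial : ℚ) ^ 3 * ((l + 3 * j).factorial : ℚ))

lemma auxA_pos (l j : ℕ) : 0 < auxA l j := by
  unfold auxA
  positivity

lemma gFn_eq (l j : ℕ) (h : 3 * j ≤ l) : gFn l j = auxG l j := by
  obtain ⟨k, rfl⟩ := Nat.exists_eq_add_of_le h
  have h1 := Nat.factorial_mul_descFactorial (n := 3 * j + k + j) (k := 2 * j) (by omega)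
  have h2 := Nat.factorial_mul_descFactorial (n := 3 * j + k + 3 * j) (k := 2 * j) (by omega)
  have h3 := Nat.factorial_mul_descFactorial (n := 3 * j + k - j) (k := 2 * j) (by omega)
  rw [show 3 * j + k + j - 2 * j = 2 * j + k by omega] at h1
  rw [show 3 * j + k + 3 * j - 2 * j = 4 * j + k by omega] at h2
  rw [show 3 * j + k - j - 2 * j = k by omega] at h3
  unfold gFn auxG
  rw [← h1, ← h2, ← h3]
  have e3 : 3 * j + k - j = 2 * j + k := by omega
  have e1 : 3 * j + k + j = 4 * j + k := by omega
  rw [e3] at h3 ⊢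
  rw [e1] at h1 ⊢
  rw [show 3 * j + k - 3 * j = k by omega]
  have p1 : ((4 * j + k).descFactorial (2 * j) : ℚ) ≠ 0 := by
    have : 0 < (4 * j + k).descFactorial (2 * j) := Nat.descFactorial_pos.2 (by omega)
    positivity
  have p2 : ((3 * j + k + 3 * j).descFactorial (2 * j) : ℚ) ≠ 0 := by
    have : 0 < (3 * j + k + 3 * j).descFactorial (2 * j) := Nat.descFactorial_pos.2 (by omega)
    positivity
  have p3 : ((2 * j + k).descFactorial (2 * j) : ℚ) ≠ 0 := by
    have : 0 < (2 * j + k).descFactorial (2 * j) := Nat.descFactorial_pos.2 (by omega)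
    positivity
  have q1 : ((4 * j + k).factorial : ℚ) = (2 * j + k).factorial * (4 * j + k).descFactorial (2 * j) := by
    exact_mod_cast h1.symm
  have q3 : ((2 * j + k).factorial : ℚ) = k.factorial * (2 * j + k).descFactorial (2 * j) := by
    exact_mod_cast h3.symm
  have z1 : (k.factorial : ℚ) ≠ 0 := by positivity
  push_cast
  rw [q1, q3]
  field_simp

lemma cFn_eq_s16 (l j : ℕ) (hj : 1 ≤ j) (h : 3 * j ≤ l) :
    cFn l j = (j : ℚ) / (4 * (l + j)) * auxA l j := by
  obtain ⟨k, rfl⟩ := Nat.exists_eq_add_of_le h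
  obtain ⟨i, rfl⟩ := Nat.exists_eq_add_of_le hj
  unfold cFn auxA
  rw [Nat.cast_choose ℚ (by omega), Nat.cast_choose ℚ (by omega)]
  rw [show 2 * (3 * (1 + i) + k + (1 + i)) - 1 = 8 * i + 2 * k + 7 by omega,
    show 3 * (1 + i) + k + (1 + i) - 1 = 4 * i + k + 3 by omega,
    show 8 * i + 2 * k + 7 - (4 * i + k + 3) = 4 * i + k + 3 + 1 by omega,
    show 4 * (3 * (1 + i) + k) - 1 - 2 * (3 * (1 + i) + k + (1 + i)) = 4 * i + 2 * k + 3 by omega,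
    show 4 * i + 2 * k + 3 - (4 * i + k + 3) = k by omega,
    show 2 * (3 * (1 + i) + k) + 2 * (1 + i) = 8 * i + 2 * k + 7 + 1 by omega,
    show 2 * (3 * (1 + i) + k) - 2 * (1 + i) = 4 * i + 2 * k + 3 + 1 by omega,
    show 3 * (1 + i) + k + (1 + i) = 4 * i + k + 3 + 1 by omega,
    show 3 * (1 + i) + k - 3 * (1 + i) = k by omega]
  rw [Nat.factorial_succ (8 * i + 2 * k + 7), Nat.factorial_succ (4 * i + 2 * k + 3),
    Nat.factorial_succ (4 * i + k + 3)]
  push_cast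
  have a1 : (4 * (i:ℚ) + k + 3 + 1) ≠ 0 := by positivity
  have a2 : (3 * (1 + (i:ℚ)) + k + (1 + i)) ≠ 0 := by positivity
  have z1 : (k.factorial : ℚ) ≠ 0 := by positivity
  have z2 : ((4 * i + k + 3).factorial : ℚ) ≠ 0 := by positivity
  rw [show (3 * (1 + (i:ℚ)) + k + (1 + i)) = (4 * (i:ℚ) + k + 3 + 1) by ring]
  field_simp
  ring

lemma auxA_succ (l j : ℕ) (h : 3 * (j + 1) ≤ l) :
    auxA l (j + 1) * (((l:ℚ) + j + 1) ^ 2 * (l - j) * (2 * l - 2 * j - 1)) =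
      auxA l j * ((2 * l + 2 * j + 1) * (l - 3 * j) * (l - 3 * j - 1) * (l - 3 * j - 2)) := by
  obtain ⟨k, rfl⟩ := Nat.exists_eq_add_of_le h
  unfold auxA
  rw [show 2 * (3 * (j + 1) + k) + 2 * (j + 1) = 8 * j + 2 * k + 6 + 1 + 1 by omega,
    show 2 * (3 * (j + 1) + k) - 2 * (j + 1) = 4 * j + 2 * k + 4 by omega,
    show 3 * (j + 1) + k + (j + 1) = 4 * j + k + 3 + 1 by omega,
    show 3 * (j + 1) + k - 3 * (j + 1) = k by omega,
    show 2 * (3 * (j + 1) + k) + 2 * j = 8 * j + 2 * k + 6 by omega,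
    show 2 * (3 * (j + 1) + k) - 2 * j = 4 * j + 2 * k + 4 + 1 + 1 by omega,
    show 3 * (j + 1) + k + j = 4 * j + k + 3 by omega,
    show 3 * (j + 1) + k - 3 * j = k + 1 + 1 + 1 by omega]
  rw [Nat.factorial_succ (8 * j + 2 * k + 6 + 1), Nat.factorial_succ (8 * j + 2 * k + 6),
    Nat.factorial_succ (4 * j + 2 * k + 4 + 1), Nat.factorial_succ (4 * j + 2 * k + 4),
    Nat.factorial_succ (4 * j + k + 3), Nat.factorial_succ (k + 1 + 1),
    Nat.factorial_succ (k + 1), Nat.factorial_succ k]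
  push_cast
  have z1 : (k.factorial : ℚ) ≠ 0 := by positivity
  have z2 : ((4 * j + k + 3).factorial : ℚ) ≠ 0 := by positivity
  have a1 : (4 * (j:ℚ) + k + 3 + 1) ≠ 0 := by positivity
  field_simp
  ring

lemma auxG_succ (l j : ℕ) (h : 3 * (j + 1) ≤ l) :
    auxG l (j + 1) * (((l:ℚ) + 3 * j + 1) * (l + 3 * j + 2) * (l + 3 * j + 3) *
        ((l - 3 * j) * (l - 3 * j - 1) * (l - 3 * j - 2))) =
      auxG l j * (((l:ℚ) + j + 1) ^ 3 * (l - j) ^ 3) := by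
  obtain ⟨k, rfl⟩ := Nat.exists_eq_add_of_le h
  unfold auxG
  rw [
    show 3 * (j + 1) + k + (j + 1) = 4 * j + k + 3 + 1 by omega,
    show 3 * (j + 1) + k - 3 * (j + 1) = k by omega,
    show 3 * (j + 1) + k - (j + 1) = 2 * j + k + 2 by omega,
    show 3 * (j + 1) + k + 3 * (j + 1) = 6 * j + k + 3 + 1 + 1 + 1 by omega,
    show 3 * (j + 1) + k - j = 2 * j + k + 2 + 1 by omega,
    show 3 * (j + 1) + k + 3 * j = 6 * j + k + 3 by omega,
    show 3 * (j + 1) + k + j = 4 * j + k + 3 by omega,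
    show 3 * (j + 1) + k - 3 * j = k + 1 + 1 + 1 by omega]
  rw [Nat.factorial_succ (6 * j + k + 3 + 1 + 1), Nat.factorial_succ (6 * j + k + 3 + 1),
    Nat.factorial_succ (6 * j + k + 3), Nat.factorial_succ (2 * j + k + 2),
    Nat.factorial_succ (4 * j + k + 3), Nat.factorial_succ (k + 1 + 1),
    Nat.factorial_succ (k + 1), Nat.factorial_succ k]
  push_cast
  have z1 : (k.factorial : ℚ) ≠ 0 := by positivity
  have z2 : ((6 * j + k + 3).factorial : ℚ) ≠ 0 := by positivity
  have z3 : ((2 * j + k + 2).factorial : ℚ) ≠ 0 := by positivity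
  have a1 : (6 * (j:ℚ) + k + 3 + 1) ≠ 0 := by positivity
  have a2 : (6 * (j:ℚ) + k + 3 + 1 + 1) ≠ 0 := by positivity
  have a3 : (6 * (j:ℚ) + k + 3 + 1 + 1 + 1) ≠ 0 := by positivity
  have a4 : (2 * (j:ℚ) + k + 2 + 1) ≠ 0 := by positivity
  field_simp
  ring

lemma auxG_lb (l : ℕ) : ∀ j : ℕ, 3 * j ≤ l →
    1 + 8 * (j:ℚ) ^ 3 / ((l:ℚ) + 1 / 2) ^ 2 ≤ auxG l j := by
  intro j
  induction j with
  | zero =>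
    intro _
    unfold auxG
    simp
    rw [div_self (by positivity)]
  | succ j ih =>
    intro h
    have ih := ih (by omega)
    have hs := auxG_succ l j h
    obtain ⟨k, rfl⟩ := Nat.exists_eq_add_of_le h
    set G := auxG (3 * (j + 1) + k) j
    set G' := auxG (3 * (j + 1) + k) (j + 1)
    push_cast at *
    set x : ℚ := (3 * ((j:ℚ) + 1) + k + 1 / 2) ^ 2 with hx
    have xpos : 0 < x := by positivity
    set den : ℚ := ((3 * ((j:ℚ) + 1) + k + 3 * j + 1) * (3 * ((j:ℚ) + 1) + k + 3 * j + 2) *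
      (3 * ((j:ℚ) + 1) + k + 3 * j + 3) *
      ((3 * ((j:ℚ) + 1) + k - 3 * j) * (3 * ((j:ℚ) + 1) + k - 3 * j - 1) *
      (3 * ((j:ℚ) + 1) + k - 3 * j - 2))) with hden
    set num : ℚ := (3 * ((j:ℚ) + 1) + k + j + 1) ^ 3 * (3 * ((j:ℚ) + 1) + k - j) ^ 3 with hnum
    have denpos : 0 < den := by
      have : den = ((6 * (j:ℚ) + k + 4) * (6 * (j:ℚ) + k + 5) *
        (6 * (j:ℚ) + k + 6) * ((k + 3) * (k + 2) * (k + 1))) := by rw [hden]; ring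
      rw [this]; positivity
    have key : (x + (24 * ((j:ℚ) + 1 / 2) ^ 2 + 2)) * den ≤ x * num := by
      rw [← sub_nonneg, hx, hden, hnum]
      ring_nf
      positivity
    have e1 : 8 * ((j:ℚ) + 1) ^ 3 / x = 8 * (j:ℚ) ^ 3 / x + (24 * ((j:ℚ) + 1 / 2) ^ 2 + 2) / x := by
      field_simp; ring
    have hG : 1 ≤ G := le_trans (by have : 0 ≤ 8 * (j:ℚ) ^ 3 / x := by positivity
                                    linarith) ih
    have e2 : G * (1 + (24 * ((j:ℚ) + 1 / 2) ^ 2 + 2) / x) ≤ G' := by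
      have : G' = G * (num / den) := by
        field_simp; linarith
      rw [this]
      apply mul_le_mul_of_nonneg_left _ (by linarith)
      rw [le_div_iff₀ denpos]
      have : (1 + (24 * ((j:ℚ) + 1 / 2) ^ 2 + 2) / x) * den =
        (x + (24 * ((j:ℚ) + 1 / 2) ^ 2 + 2)) * den / x := by field_simp
      rw [this, div_le_iff₀ xpos]
      linarith
    have e3 : 0 ≤ (24 * ((j:ℚ) + 1 / 2) ^ 2 + 2) / x := by positivity
    rw [e1]
    nlinarith

/-- telescoping function -/
def auxT (l j : ℕ) : ℚ :=
  if 3 * j ≤ l then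
    auxA l j * (((l:ℚ) + j) ^ 2 * (l - j + 1) * (2 * l - 2 * j + 1)) *
      ((j:ℚ) * (j - 1) * (2 * j - 1) / (4 * (l:ℚ) ^ 6))
  else 0

lemma auxT_diff (l j : ℕ) (h : 3 * j ≤ l) :
    auxT l j - auxT l (j + 1) = auxA l j *
      ((((l:ℚ) + j) ^ 2 * (l - j + 1) * (2 * l - 2 * j + 1)) *
        ((j:ℚ) * (j - 1) * (2 * j - 1) / (4 * (l:ℚ) ^ 6)) -
       ((2 * l + 2 * j + 1) * (l - 3 * j) * (l - 3 * j - 1) * (l - 3 * j - 2)) *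
        (((j:ℚ) + 1) * j * (2 * j + 1) / (4 * (l:ℚ) ^ 6))) := by
  unfold auxT
  rw [if_pos h]
  by_cases h' : 3 * (j + 1) ≤ l
  · rw [if_pos h']
    have := auxA_succ l j h'
    push_cast
    linear_combination (-(((j:ℚ) + 1) * j * (2 * j + 1) / (4 * (l:ℚ) ^ 6))) * this
  · rw [if_neg h']
    have : ((l:ℚ) - 3 * j) * (l - 3 * j - 1) * (l - 3 * j - 2) = 0 := by
      have : l = 3 * j ∨ l = 3 * j + 1 ∨ l = 3 * j + 2 := by omega
      rcases this with rfl | rfl | rfl <;> push_cast <;> ring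
    linear_combination (auxA l j * (2 * l + 2 * j + 1) *
      (((j:ℚ) + 1) * j * (2 * j + 1) / (4 * (l:ℚ) ^ 6))) * this

def auxP (l j : ℚ) : ℚ :=
  j ^ 2 * (8 * j ^ 2 * (l - j) - 2 * (l + 1 / 2) ^ 2) * l ^ 6 -
  (((l + j) ^ 2 * (l - j + 1) * (2 * l - 2 * j + 1)) * (j * (j - 1) * (2 * j - 1) / 4) -
       ((2 * l + 2 * j + 1) * (l - 3 * j) * (l - 3 * j - 1) * (l - 3 * j - 2)) *
        ((j + 1) * j * (2 * j + 1) / 4)) * (l ^ 2 - j ^ 2) * (l + 1 / 2) ^ 2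

lemma auxP_pos (l j : ℕ) (hj : 1 ≤ j) (h : 3 * j ≤ l) (hl : 37 ≤ l) : 0 < auxP l j := by
  by_cases h10 : 10 ≤ j
  · obtain ⟨k, rfl⟩ := Nat.exists_eq_add_of_le h
    obtain ⟨i, rfl⟩ := Nat.exists_eq_add_of_le h10
    have h1 : 0 ≤ (4 / 5 : ℚ) * ((3 * (10 + i) + k : ℕ):ℚ) ^ 2 - 16 * ((10 + i : ℕ) : ℚ) * ((3 * (10 + i) + k : ℕ):ℚ)
        + 8 * ((10 + i : ℕ) : ℚ) ^ 3 := by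
      have : 0 ≤ (4 / 5 : ℚ) * (((3 * (10 + i) + k : ℕ):ℚ) - 10 * ((10 + i : ℕ) : ℚ)) ^ 2 +
          8 * ((10 + i : ℕ) : ℚ) ^ 2 * i := by positivity
      push_cast at *
      linarith
    have h2 := mul_nonneg (show 0 ≤ ((10 + i : ℕ) : ℚ) ^ 2 * ((3 * (10 + i) + k : ℕ):ℚ) ^ 6 by positivity) h1
    refine lt_of_le_of_lt h2 ?_
    rw [← sub_pos]
    unfold auxP
    push_cast
    ring_nf
    positivity
  · obtain ⟨k, rfl⟩ := Nat.exists_eq_add_of_le hl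
    have h10' : j < 10 := by omega
    clear h10 h
    unfold auxP
    interval_cases j <;> (push_cast; ring_nf; positivity)

lemma term_lb (l j : ℕ) (hj : 1 ≤ j) (h : 3 * j ≤ l) (hl : 37 ≤ l) :
    (auxT l j - auxT l (j + 1)) / 4 < dFn l j * cFn l j := by
  have hP := auxP_pos l j hj h hl
  have hA := auxA_pos l j
  have hjl : (3 * j : ℚ) ≤ l := by exact_mod_cast h
  have hj' : (1:ℚ) ≤ j := by exact_mod_cast hj
  have hd : 8 * (j:ℚ) ^ 3 / ((l:ℚ) + 1 / 2) ^ 2 - 2 * j / (l - j) ≤ dFn l j := by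
    have := auxG_lb l j h
    unfold dFn hFn
    rw [gFn_eq l j h]
    have e : ((l:ℚ) + j) / (l - j) = 1 + 2 * j / (l - j) := by
      have : (l:ℚ) - j ≠ 0 := by linarith
      field_simp; ring
    rw [e]; linarith
  have hc : 0 < (j : ℚ) / (4 * (l + j)) * auxA l j := by positivity
  rw [cFn_eq_s16 l j hj h, auxT_diff l j h]
  refine lt_of_lt_of_le ?_ (mul_le_mul_of_nonneg_right hd hc.le)
  rw [← sub_pos]
  have hlj : 0 < (l:ℚ) - j := by linarith
  have hl0 : (0:ℚ) < l := by linarith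
  have : (8 * (j:ℚ) ^ 3 / ((l:ℚ) + 1 / 2) ^ 2 - 2 * j / (l - j)) * ((j : ℚ) / (4 * (l + j)) * auxA l j)
      - auxA l j *
      ((((l:ℚ) + j) ^ 2 * (l - j + 1) * (2 * l - 2 * j + 1)) *
        ((j:ℚ) * (j - 1) * (2 * j - 1) / (4 * (l:ℚ) ^ 6)) -
       ((2 * l + 2 * j + 1) * (l - 3 * j) * (l - 3 * j - 1) * (l - 3 * j - 2)) *
        (((j:ℚ) + 1) * j * (2 * j + 1) / (4 * (l:ℚ) ^ 6))) / 4 =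
      auxA l j * auxP l j / (4 * ((l:ℚ) + 1 / 2) ^ 2 * (l - j) * (l + j) * l ^ 6) := by
    unfold auxP
    have n1 : (l:ℚ) - j ≠ 0 := hlj.ne'
    have n2 : (l:ℚ) + j ≠ 0 := by positivity
    have n3 : (l:ℚ) + 1 / 2 ≠ 0 := by positivity
    generalize (l:ℚ) = L at *
    generalize (j:ℚ) = J at *
    obtain ⟨y, hy⟩ : ∃ y, y = L + 1 / 2 := ⟨_, rfl⟩
    rw [← hy]
    have hy0 : y ≠ 0 := by rw [hy]; exact n3
    clear n3 hd hP hy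
    field_simp
    ring
  rw [this]
  positivity

lemma tele (f : ℕ → ℚ) (n : ℕ) : ∑ j ∈ Finset.Icc 1 n, (f j - f (j + 1)) / 4 = (f 1 - f (n + 1)) / 4 := by
  induction n with
  | zero => simp
  | succ n ih => rw [Finset.sum_Icc_succ_top (by omega), ih]; ring

lemma big_case (l : ℕ) (hl : 37 ≤ l) : 0 < ∑ j ∈ Finset.Icc 1 (l / 3), dFn l j * cFn l j := by
  have h := tele (auxT l) (l / 3)
  have h1 : auxT l 1 = 0 := by unfold auxT; simp
  have h2 : auxT l (l / 3 + 1) = 0 := by unfold auxT; rw [if_neg (by omega)]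
  rw [h1, h2] at h
  have : ∑ j ∈ Finset.Icc 1 (l / 3), (auxT l j - auxT l (j + 1)) / 4 <
      ∑ j ∈ Finset.Icc 1 (l / 3), dFn l j * cFn l j := by
    apply Finset.sum_lt_sum_of_nonempty
    · exact ⟨1, by simp; omega⟩
    · intro j hj
      rw [Finset.mem_Icc] at hj
      exact term_lb l j hj.1 (by omega) hl
  rw [h] at this
  simpa using this

set_option maxHeartbeats 4000000 in
lemma small_case (l : ℕ) (hl : 9 ≤ l) (hl' : l < 37) :
    0 < ∑ j ∈ Finset.Icc 1 (l / 3), dFn l j * cFn l j := by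
  unfold dFn cFn gFn hFn
  interval_cases l <;>
    norm_num [Finset.sum_Icc_succ_top, Nat.choose_eq_descFactorial_div_factorial]

theorem stmt16 (l : ℕ) (hl : 9 ≤ l) :
    0 < ∑ j ∈ Finset.Icc 1 (l / 3), dFn l j * qFn l j := by
  have hS : 0 < ∑ j ∈ Finset.Icc 1 (l / 3), cFn l j := by
    apply Finset.sum_pos
    · intro j hj
      rw [Finset.mem_Icc] at hj
      rw [cFn_eq_s16 l j hj.1 (by omega)]
      have := auxA_pos l j
      have : (0:ℚ) < j := by exact_mod_cast hj.1
      positivity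
    · exact ⟨1, by simp; omega⟩
  have hM : 0 < ∑ j ∈ Finset.Icc 1 (l / 3), dFn l j * cFn l j := by
    by_cases h : l < 37
    · exact small_case l hl h
    · exact big_case l (by omega)
  unfold qFn
  simp_rw [← mul_div_assoc]
  rw [← Finset.sum_div]
  exact div_pos hM hS
end

section
/- Define, for integers a ≥ 2, L(a) = (4a²+a−1)^(2a+1) · (4a²+a)^(2a+2) / ( (4a²−a−3)^(2a+1) · (4a²+3a+2)^(2a+2) ) − 1, where x^(m) denotes the descending factorial. Then, with α = 1/a, as a → ∞ one has log(1 + L(a)) = α² + (19/12)α³ + o(α³), and consequently L(a) = α² + (19/12)α³ + o(α³). -/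
open Filter Asymptotics

/-- `L(a) = (4a²+a−1)^(2a+1)(4a²+a)^(2a+2) / ((4a²−a−3)^(2a+1)(4a²+3a+2)^(2a+2)) − 1`,
where `x^(m)` denotes the descending factorial. -/
def Lfn (a : ℕ) : ℚ :=
  ((Nat.descFactorial (4 * a ^ 2 + a - 1) (2 * a + 1) : ℚ) *
      (Nat.descFactorial (4 * a ^ 2 + a) (2 * a + 2) : ℚ)) /
    ((Nat.descFactorial (4 * a ^ 2 - a - 3) (2 * a + 1) : ℚ) *
      (Nat.descFactorial (4 * a ^ 2 + 3 * a + 2) (2 * a + 2) : ℚ)) - 1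

lemma aux_log {u b : ℝ} (hb : b ≤ 1/2) (hu : |u| ≤ b) :
    |Real.log (1 + u) - (u - u^2/2 + u^3/3 - u^4/4)| ≤ 2 * b^5 := by
  have hu2 : |u| ≤ 1/2 := hu.trans hb
  have h := Real.abs_log_sub_add_sum_range_le (x := -u) (by rw [abs_neg]; linarith) 4
  rw [abs_neg] at h
  simp only [Finset.sum_range_succ, Finset.sum_range_zero] at h
  have e : Real.log (1 + u) - (u - u^2/2 + u^3/3 - u^4/4)
      = (0 + (-u) ^ (0 + 1) / (((0:ℕ):ℝ) + 1) + (-u) ^ (1 + 1) / (((1:ℕ):ℝ) + 1)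
        + (-u) ^ (2 + 1) / (((2:ℕ):ℝ) + 1) + (-u) ^ (3 + 1) / (((3:ℕ):ℝ) + 1))
        + Real.log (1 - -u) := by
    rw [sub_neg_eq_add]; push_cast; ring
  rw [e]
  refine h.trans ?_
  have h5 : |u|^(4+1) ≤ b^5 := pow_le_pow_left₀ (abs_nonneg u) hu 5
  rw [div_le_iff₀ (by linarith)]
  have : 0 ≤ b^5 := (by positivity : (0:ℝ) ≤ |u|^(4+1)).trans h5
  nlinarith

/-- closed form main term primitive -/
noncomputable def Gfn (N x : ℝ) : ℝ :=
  (x*(x+1)/2)/N - (x*(x+1)*(2*x+1)/6)/N^2/2 + ((x*(x+1))^2/4)/N^3/3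
    - (x*(x+1)*(2*x+1)*(3*x^2+3*x-1)/30)/N^4/4

lemma Gfn_sum (N c : ℝ) (m : ℕ) :
    ∑ i ∈ Finset.range m, ((c-i)/N - ((c-i)/N)^2/2 + ((c-i)/N)^3/3 - ((c-i)/N)^4/4)
      = Gfn N c - Gfn N (c - m) := by
  induction m with
  | zero => simp
  | succ m ih =>
    rw [Finset.sum_range_succ, ih]
    unfold Gfn
    push_cast
    simp only [div_eq_mul_inv, mul_pow, inv_pow]
    ring

lemma log_desc (x m : ℕ) (N c b : ℝ) (hN : 0 < N) (hb : b ≤ 1/2) (hc : (x:ℝ) = N + c)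
    (hi : ∀ i < m, |c - (i:ℝ)| ≤ b * N) :
    0 < (x.descFactorial m : ℝ) ∧
    |Real.log (x.descFactorial m) - m * Real.log N - (Gfn N c - Gfn N (c - m))|
      ≤ m * (2 * b^5) := by
  have hu : ∀ i < m, |(c - (i:ℝ))/N| ≤ b := fun i h => by
    rw [abs_div, abs_of_pos hN, div_le_iff₀ hN]; exact hi i h
  have hpos : ∀ i < m, 0 < 1 + (c - (i:ℝ))/N := fun i h => by
    have := (abs_le.1 (hu i h)).1; linarith
  have hfac : ∀ i < m, ((x - i : ℕ) : ℝ) = N * (1 + (c - (i:ℝ))/N) := fun i h => by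
    have h1 : N * (1 + (c - (i:ℝ))/N) = x - i := by rw [hc]; field_simp; ring
    have h2 : (0:ℝ) < x - i := by rw [← h1]; exact mul_pos hN (hpos i h)
    have h3 : i ≤ x := by
      have : (i:ℝ) ≤ x := by linarith
      exact_mod_cast this
    rw [h1, Nat.cast_sub h3]
  have hprod : (x.descFactorial m : ℝ) = ∏ i ∈ Finset.range m, (N * (1 + (c - (i:ℝ))/N)) := by
    rw [Nat.descFactorial_eq_prod_range, Nat.cast_prod]
    exact Finset.prod_congr rfl fun i h => hfac i (Finset.mem_range.1 h)
  constructor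
  · rw [hprod]
    exact Finset.prod_pos fun i h => mul_pos hN (hpos i (Finset.mem_range.1 h))
  · rw [hprod, Real.log_prod fun i h => (mul_pos hN (hpos i (Finset.mem_range.1 h))).ne']
    have h4 : ∑ i ∈ Finset.range m, Real.log (N * (1 + (c - (i:ℝ))/N))
        = m * Real.log N + ∑ i ∈ Finset.range m, Real.log (1 + (c - (i:ℝ))/N) := by
      rw [Finset.sum_congr rfl fun i h =>
        Real.log_mul hN.ne' (hpos i (Finset.mem_range.1 h)).ne', Finset.sum_add_distrib]
      simp
    rw [h4, ← Gfn_sum, add_sub_cancel_left, ← Finset.sum_sub_distrib]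
    refine (Finset.abs_sum_le_sum_abs _ _).trans ?_
    refine (Finset.sum_le_sum fun i h => aux_log hb (hu i (Finset.mem_range.1 h))).trans ?_
    simp

lemma main_alg (a : ℝ) (ha : 1 ≤ a) :
    |((Gfn (4*a^2) (a-1) - Gfn (4*a^2) (a-1-(2*a+1)))
      + (Gfn (4*a^2) a - Gfn (4*a^2) (a-(2*a+2)))
      - (Gfn (4*a^2) (-a-3) - Gfn (4*a^2) (-a-3-(2*a+1)))
      - (Gfn (4*a^2) (3*a+2) - Gfn (4*a^2) (3*a+2-(2*a+2))))
      - (1/a^2 + (19/12)/a^3)| ≤ 5 / a^4 := by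
  have h0 : 0 < a := by linarith
  have e : ((Gfn (4*a^2) (a-1) - Gfn (4*a^2) (a-1-(2*a+1)))
      + (Gfn (4*a^2) a - Gfn (4*a^2) (a-(2*a+2)))
      - (Gfn (4*a^2) (-a-3) - Gfn (4*a^2) (-a-3-(2*a+1)))
      - (Gfn (4*a^2) (3*a+2) - Gfn (4*a^2) (3*a+2-(2*a+2))))
      - (1/a^2 + (19/12)/a^3)
      = (19/16*a^4 + 161/128*a^3+401/384*a^2+31/64*a+3/32)/a^8 := by
    unfold Gfn
    field_simp
    ring
  rw [e, abs_of_nonneg (by positivity), div_le_div_iff₀ (by positivity) (by positivity)]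
  have h1 : a^3 ≤ a^4 := pow_le_pow_right₀ ha (by norm_num)
  have h2 : a^2 ≤ a^4 := pow_le_pow_right₀ ha (by norm_num)
  have h3 : a ≤ a^4 := le_self_pow₀ ha (by norm_num)
  have h4 : 1 ≤ a^4 := one_le_pow₀ ha
  have : 19/16*a^4 + 161/128*a^3+401/384*a^2+31/64*a+3/32 ≤ 5 * a^4 := by linarith
  calc _ ≤ (5*a^4) * a^4 := by gcongr
    _ = _ := by ring

lemma key (a : ℕ) (ha : 3 ≤ a) :
    0 < 1 + ((Lfn a : ℚ) : ℝ) ∧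
    |Real.log (1 + ((Lfn a : ℚ) : ℝ)) - (1 / (a : ℝ) ^ 2 + (19 / 12) / (a : ℝ) ^ 3)|
      ≤ 300 / (a:ℝ)^4 := by
  have haR : (3:ℝ) ≤ a := by exact_mod_cast ha
  have h0 : (0:ℝ) < a := by linarith
  have hN : (0:ℝ) < 4 * (a:ℝ)^2 := by positivity
  have hb : 3/(2*(a:ℝ)) ≤ 1/2 := by
    rw [div_le_div_iff₀ (by positivity) (by norm_num)]; linarith
  have hbN : 3/(2*(a:ℝ)) * (4 * (a:ℝ)^2) = 6 * a := by field_simp; ring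
  have hsq : a + 3 ≤ 4 * a^2 := by nlinarith
  obtain ⟨p1, l1⟩ := log_desc (4*a^2+a-1) (2*a+1) (4*(a:ℝ)^2) (a-1) (3/(2*(a:ℝ))) hN hb
    (by rw [Nat.cast_sub (by omega)]; push_cast; ring)
    (fun i hi => by
      have : (i:ℝ) < 2*a+1 := by exact_mod_cast hi
      have : (0:ℝ) ≤ i := i.cast_nonneg
      rw [hbN, abs_le]; constructor <;> linarith)
  obtain ⟨p2, l2⟩ := log_desc (4*a^2+a) (2*a+2) (4*(a:ℝ)^2) a (3/(2*(a:ℝ))) hN hb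
    (by push_cast; ring)
    (fun i hi => by
      have : (i:ℝ) < 2*a+2 := by exact_mod_cast hi
      have : (0:ℝ) ≤ i := i.cast_nonneg
      rw [hbN, abs_le]; constructor <;> linarith)
  obtain ⟨p3, l3⟩ := log_desc (4*a^2-a-3) (2*a+1) (4*(a:ℝ)^2) (-a-3) (3/(2*(a:ℝ))) hN hb
    (by rw [Nat.cast_sub (by omega), Nat.cast_sub (by omega)]; push_cast; ring)
    (fun i hi => by
      have : (i:ℝ) < 2*a+1 := by exact_mod_cast hi
      have : (0:ℝ) ≤ i := i.cast_nonneg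
      rw [hbN, abs_le]; constructor <;> linarith)
  obtain ⟨p4, l4⟩ := log_desc (4*a^2+3*a+2) (2*a+2) (4*(a:ℝ)^2) (3*a+2) (3/(2*(a:ℝ))) hN hb
    (by push_cast; ring)
    (fun i hi => by
      have : (i:ℝ) < 2*a+2 := by exact_mod_cast hi
      have : (0:ℝ) ≤ i := i.cast_nonneg
      rw [hbN, abs_le]; constructor <;> linarith)
  have hm := main_alg (a:ℝ) (by linarith)
  have hL : 1 + ((Lfn a : ℚ) : ℝ) =
      (((4*a^2+a-1).descFactorial (2*a+1) : ℝ) * ((4*a^2+a).descFactorial (2*a+2) : ℝ)) /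
      (((4*a^2-a-3).descFactorial (2*a+1) : ℝ) * ((4*a^2+3*a+2).descFactorial (2*a+2) : ℝ)) := by
    unfold Lfn
    rw [Rat.cast_sub, Rat.cast_div, Rat.cast_mul, Rat.cast_mul]
    simp only [Rat.cast_natCast, Rat.cast_one]
    ring
  refine ⟨by rw [hL]; positivity, ?_⟩
  rw [hL, Real.log_div (mul_pos p1 p2).ne' (mul_pos p3 p4).ne', Real.log_mul p1.ne' p2.ne',
    Real.log_mul p3.ne' p4.ne']
  push_cast at l1 l2 l3 l4
  have herr : (2*(2*(a:ℝ)+1) + 2*(2*(a:ℝ)+2)) * (2 * (3/(2*(a:ℝ)))^5) + 5/(a:ℝ)^4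
      ≤ 300/(a:ℝ)^4 := by
    have e : (2*(2*(a:ℝ)+1) + 2*(2*(a:ℝ)+2)) * (2 * (3/(2*(a:ℝ)))^5)
      = ((8*a+6)*(243/16)/a)/(a:ℝ)^4 := by field_simp; ring
    rw [e, ← add_div]
    gcongr
    have : (8*(a:ℝ)+6)*(243/16)/a ≤ 290 := by
      rw [div_le_iff₀ h0]; linarith
    linarith
  refine le_trans ?_ herr
  rw [abs_le] at *
  constructor <;> linarith [l1.1, l1.2, l2.1, l2.2, l3.1, l3.2, l4.1, l4.2, hm.1, hm.2]

lemma isLittleO_of_bound (f : ℕ → ℝ) (C : ℝ) (h : ∀ a : ℕ, 7 ≤ a → |f a| ≤ C / (a:ℝ)^4) :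
    f =o[atTop] (fun a : ℕ => 1 / (a : ℝ) ^ 3) := by
  have h1 : f =O[atTop] (fun a : ℕ => 1 / (a:ℝ)^4) := by
    refine IsBigO.of_bound C ?_
    filter_upwards [eventually_ge_atTop 7] with a ha
    have := h a ha
    rw [Real.norm_eq_abs, Real.norm_eq_abs, abs_of_nonneg (by positivity : (0:ℝ) ≤ 1/(a:ℝ)^4)]
    rw [mul_one_div]; exact this
  refine h1.trans_isLittleO ?_
  have h2 : (fun a : ℕ => 1 / (a:ℝ)) =o[atTop] (fun _ : ℕ => (1:ℝ)) := by
    rw [isLittleO_one_iff]; exact tendsto_one_div_atTop_nhds_zero_nat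
  have h3 := h2.mul_isBigO (isBigO_refl (fun a : ℕ => 1 / (a:ℝ)^3) atTop)
  refine h3.congr (fun a => ?_) (fun a => ?_)
  · simp only [one_div, ← mul_inv]; ring
  · ring

/-- With `α = 1/a`, as `a → ∞`: `log(1 + L(a)) = α² + (19/12)α³ + o(α³)`, and
consequently `L(a) = α² + (19/12)α³ + o(α³)`. -/
theorem stmt17 :
    (fun a : ℕ => Real.log (1 + ((Lfn a : ℚ) : ℝ))
        - (1 / (a : ℝ) ^ 2 + (19 / 12) / (a : ℝ) ^ 3))
      =o[atTop] (fun a : ℕ => 1 / (a : ℝ) ^ 3) ∧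
    (fun a : ℕ => ((Lfn a : ℚ) : ℝ)
        - (1 / (a : ℝ) ^ 2 + (19 / 12) / (a : ℝ) ^ 3))
      =o[atTop] (fun a : ℕ => 1 / (a : ℝ) ^ 3) := by
  refine ⟨isLittleO_of_bound _ 300 fun a ha => (key a (by omega)).2, ?_⟩
  refine isLittleO_of_bound _ 100000 fun a ha => ?_
  obtain ⟨hp, hk⟩ := key a (by omega)
  have haR : (7:ℝ) ≤ a := by exact_mod_cast ha
  have h0 : (0:ℝ) < a := by linarith
  set y := Real.log (1 + ((Lfn a : ℚ) : ℝ)) with hy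
  have hexp : ((Lfn a : ℚ) : ℝ) = Real.exp y - 1 := by rw [hy, Real.exp_log hp]; ring
  have hyb : |y| ≤ 40 / (a:ℝ)^2 := by
    have e1 : 300/(a:ℝ)^4 ≤ 34/(a:ℝ)^2 := by
      rw [div_le_div_iff₀ (by positivity) (by positivity)]
      have : 0 < (a:ℝ)^2 := by positivity
      have h49 : (49:ℝ) ≤ (a:ℝ)^2 := by nlinarith
      nlinarith [mul_le_mul_of_nonneg_right h49 this.le]
    have e2 : 0 ≤ (19/12)/(a:ℝ)^3 := by positivity
    have e3 : (19/12)/(a:ℝ)^3 ≤ 1/(a:ℝ)^2 := by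
      rw [div_le_div_iff₀ (by positivity) (by positivity)]
      have : 0 < (a:ℝ)^2 := by positivity
      nlinarith
    have e4 : 0 ≤ 1/(a:ℝ)^2 := by positivity
    have e5 : 40/(a:ℝ)^2 = 40 * (1/(a:ℝ)^2) := by ring
    have e6 : 34/(a:ℝ)^2 = 34 * (1/(a:ℝ)^2) := by ring
    rw [abs_le] at *
    constructor <;> linarith [hk.1, hk.2]
  have hy1 : |y| ≤ 1 := by
    refine hyb.trans ?_
    rw [div_le_iff₀ (by positivity)]
    nlinarith
  have hq := Real.abs_exp_sub_one_sub_id_le hy1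
  have hy2 : y^2 ≤ 1600/(a:ℝ)^4 := by
    rw [← sq_abs]
    calc |y|^2 ≤ (40/(a:ℝ)^2)^2 := by gcongr
      _ = _ := by ring
  have e7 : 100000/(a:ℝ)^4 = 300/(a:ℝ)^4 + 1600/(a:ℝ)^4 + 98100/(a:ℝ)^4 := by ring
  have e8 : 0 ≤ 98100/(a:ℝ)^4 := by positivity
  rw [hexp, e7]
  rw [abs_le] at hq hk ⊢
  constructor <;> linarith [hk.1, hk.2, hq.1, hq.2]
end
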